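/- Suppose J ∈ C¹(X) satisfies (I1)–(I8), dim X⁺ = ∞, J is even, G satisfies condition (G), and condition (M)_0^β holds for every β > 0. Then J has infinitely many distinct critical orbits. -/

import Mathlib

/-!
STATEMENT 3.  Abstract multiplicity theorem: if J ∈ C¹(X) on X = X⁺ ⊕ X⁻ satisfies
(I1)–(I8), dim X⁺ = ∞, J is even, a group G satisfies (G), and (M)_0^β holds for
every β > 0, then J has infinitely many distinct critical orbits.
-/

open Filter Topology

noncomputable section

variable {P Q : Type*}
  [NormedAddCommGroup P] [InnerProductSpace ℝ P] [CompleteSpace P]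
  [NormedAddCommGroup Q] [NormedSpace ℝ Q] [CompleteSpace Q]

/-- The norm ‖u‖ = (‖u⁺‖² + ‖u⁻‖²)^{1/2} on X = X⁺ ⊕ X⁻. -/
def XNorm (u : P × Q) : ℝ := Real.sqrt (‖u.1‖ ^ 2 + ‖u.2‖ ^ 2)

/-- Convergence in the 𝒯 topology: norm convergence in X⁺, weak convergence in X⁻. -/
def TConv (u : ℕ → P × Q) (v : P × Q) : Prop :=
  Tendsto (fun n => (u n).1) atTop (nhds v.1) ∧
    ∀ ℓ : Q →L[ℝ] ℝ, Tendsto (fun n => ℓ (u n).2) atTop (nhds (ℓ v.2))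

/-- The functional J(u) = ½‖u⁺‖² − I(u). -/
def Jfun (I : P × Q → ℝ) (u : P × Q) : ℝ := ‖u.1‖ ^ 2 / 2 - I u

/-- ℳ = {u : I′(u)|_{X⁻} = 0}. -/
def MSet (I : P × Q → ℝ) : Set (P × Q) :=
  {u | ∀ v : Q, fderiv ℝ I u (0, v) = 0}

/-- 𝒩 = {u ∈ ℳ ∖ X⁻ : J′(u)(u) = 0}. -/
def NSet (I : P × Q → ℝ) : Set (P × Q) :=
  {u | u ∈ MSet I ∧ u.1 ≠ 0 ∧ fderiv ℝ (Jfun I) u u = 0}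

/-- The hypotheses (I1)–(I8) on I (with the data r, a of (I6)). -/
structure HypI (I : P × Q → ℝ) (r a : ℝ) : Prop where
  refl : Function.Surjective (NormedSpace.inclusionInDoubleDual ℝ Q)
  i1 : ContDiff ℝ 1 I ∧ I 0 = 0 ∧ ∀ u, 0 ≤ I u
  i2 : ∀ (u : ℕ → P × Q) (v : P × Q), TConv u v →
    ∀ c : ℝ, c < I v → ∀ᶠ n in atTop, c < I (u n)
  i3 : ∀ (u : ℕ → P × Q) (v : P × Q), TConv u v →
    Tendsto (fun n => I (u n)) atTop (nhds (I v)) → Tendsto u atTop (nhds v)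
  i4 : ∀ M : ℝ, ∃ R : ℝ, ∀ u : P × Q, R ≤ XNorm u → M ≤ ‖u.1‖ + I u
  i5 : ∀ u ∈ MSet I, ∀ v : Q, v ≠ 0 → I u < I (u + (0, v))
  i6 : 0 < r ∧ a = sInf {y : ℝ | ∃ p : P, ‖p‖ = r ∧ y = Jfun I (p, 0)} ∧ 0 < a
  i7 : ∀ (t : ℕ → ℝ) (u : ℕ → P × Q) (p : P), Tendsto t atTop atTop →
    Tendsto (fun n => (u n).1) atTop (nhds p) → p ≠ 0 →
    Tendsto (fun n => I (t n • u n) / t n ^ 2) atTop atTop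
  i8 : ∀ u ∈ NSet I, ∀ t : ℝ, 0 ≤ t → ∀ v : Q,
    (t ^ 2 - 1) / 2 * fderiv ℝ I u u + I u - I (t • u + (0, v)) ≤ 0

/-- The map m : X⁺ → ℳ (u⁺ ↦ unique point of (u⁺ + X⁻) ∩ ℳ). -/
structure IsMMap (I : P × Q → ℝ) (m : P → P × Q) : Prop where
  mem : ∀ p : P, m p ∈ MSet I ∧ (m p).1 = p
  uniq : ∀ (p : P) (w : P × Q), w ∈ MSet I → w.1 = p → w = m p

/-- The mountain pass value c_ℳ over paths in ℳ. -/
def cM (I : P × Q → ℝ) (r : ℝ) : ℝ :=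
  sInf {y : ℝ | ∃ γ : C(Set.Icc (0:ℝ) 1, P × Q),
    (∀ t, γ t ∈ MSet I) ∧ γ ⟨0, by norm_num⟩ = 0 ∧
    r < ‖(γ ⟨1, by norm_num⟩).1‖ ∧ Jfun I (γ ⟨1, by norm_num⟩) < 0 ∧
    y = sSup (Set.range fun t => Jfun I (γ t))}


section Multiplicity

variable {G : Type*} [Group G]

/-- A Cerami-type sequence for 𝒥 = J∘m between the levels 0 and β
(0 ≤ liminf 𝒥(u_n) ≤ limsup 𝒥(u_n) ≤ β and (1+‖u_n‖)𝒥′(u_n) → 0). -/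
def CeramiBdd (I : P × Q → ℝ) (m : P → P × Q) (β : ℝ) (u : ℕ → P) : Prop :=
  Tendsto (fun n => (1 + ‖u n‖) * ‖fderiv ℝ (fun p => Jfun I (m p)) (u n)‖)
    atTop (nhds 0) ∧
  ∀ ε : ℝ, 0 < ε → ∀ᶠ n in atTop,
    -ε ≤ Jfun I (m (u n)) ∧ Jfun I (m (u n)) ≤ β + ε

/-- The action of g restricted to X⁺. -/
def actP (act : G → P × Q → P × Q) (g : G) (p : P) : P := (act g (p, 0)).1

/-- There are finitely many critical orbits of 𝒥 in {0 ≤ 𝒥 ≤ β}. -/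
def FinOrbits (I : P × Q → ℝ) (m : P → P × Q) (act : G → P × Q → P × Q)
    (β : ℝ) : Prop :=
  ∃ S : Finset P, ∀ p : P, fderiv ℝ (fun q => Jfun I (m q)) p = 0 →
    0 ≤ Jfun I (m p) → Jfun I (m p) ≤ β → ∃ q ∈ S, ∃ g : G, actP act g q = p

/-- Condition (M)_0^β. -/
def McondZero (I : P × Q → ℝ) (m : P → P × Q) (act : G → P × Q → P × Q)
    (β : ℝ) : Prop :=
  -- (a): Cerami-bounded sequences are bounded (limsup ‖u_n‖ ≤ M)
  (∃ M : ℝ, 0 < M ∧ ∀ u : ℕ → P, CeramiBdd I m β u →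
    ∀ ε : ℝ, 0 < ε → ∀ᶠ n in atTop, ‖u n‖ ≤ M + ε) ∧
  -- (b)
  (FinOrbits I m act β → ∃ mβ : ℝ, 0 < mβ ∧
    ∀ u v : ℕ → P, CeramiBdd I m β u → CeramiBdd I m β v →
      (∀ᶠ n in atTop, ‖u n - v n‖ < mβ) →
      -- liminf ‖u_n − v_n‖ = 0
      ∀ ε : ℝ, 0 < ε → ∃ᶠ n in atTop, ‖u n - v n‖ < ε)

/-!
Maximising `J` over each fibre `p + X⁻` leaves the even functional `φ = J ∘ m` on the Hilbert space
`X⁺`. The map `m` is continuous by weak compactness and (I2)–(I4), and since `J ∘ m` is a fibrewise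
maximum, the envelope argument makes it `C¹`.

If there were only finitely many critical orbits, `φ` would have a finite set `C` of critical
values. Let `W ⊆ X⁺` be a subspace of dimension `n`. Outside a bounded set `φ < 0` on `W`, and the
inclusion of a large ball is lowered level by level through odd maps. Ekeland's principle on a
space of such maps replaces a pseudo-gradient flow. By (M) the critical points at a level `c` are
uniformly isolated, so passing `c` costs removing a set near them that splits into two antipodal
halves; give these the colours `(c, ±)`. Below level `a` the deformed ball misses the sphere of
radius `r`, so a bounded symmetric neighbourhood `O` of `0` in `W` has a boundary collar coloured
antipodally by `C`. Fan's combinatorial lemma, a form of Borsuk–Ulam, then gives `n ≤ |C|`, which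
is absurd for large `n`.
-/

section WeakCompactness

variable {E : Type*} [NormedAddCommGroup E] [NormedSpace ℝ E]

theorem exists_seq_dual_separating {s : Set E} (hs : TopologicalSpace.IsSeparable s) :
    ∃ ℓ : ℕ → StrongDual ℝ E, ∀ y ∈ s, (∀ k, ℓ k y = 0) → y = 0 := by
  obtain ⟨c, hc, hsc⟩ := hs
  rcases c.eq_empty_or_nonempty with rfl | hne
  · exact ⟨0, fun y hy => by simpa using hsc hy⟩
  obtain ⟨y, rfl⟩ := hc.exists_eq_range hne
  choose ℓ hℓ_norm hℓ_apply using fun k => exists_dual_vector'' ℝ (y k)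
  refine ⟨ℓ, fun z hz h0 => norm_le_zero_iff.1 (le_of_forall_pos_le_add fun ε hε => ?_)⟩
  obtain ⟨_, ⟨k, rfl⟩, hk⟩ := Metric.mem_closure_iff.1 (hsc hz) (ε / 2) (half_pos hε)
  rw [dist_comm, dist_eq_norm] at hk
  have hyk : ‖y k‖ ≤ ‖y k - z‖ :=
    calc ‖y k‖ = ℓ k (y k - z) := by rw [map_sub, h0 k, hℓ_apply k, sub_zero]; rfl
      _ ≤ ‖y k - z‖ := (le_abs_self _).trans ((ℓ k).le_of_opNorm_le_of_le (hℓ_norm k) le_rfl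
          |>.trans_eq (one_mul _))
  linarith [norm_le_insert (y k) z]

theorem isCompact_closure_toWeakSpace_image
    (hrefl : Function.Surjective (NormedSpace.inclusionInDoubleDual ℝ E)) {s : Set E}
    (hs : Bornology.IsBounded s) : IsCompact (closure (toWeakSpace ℝ E '' s)) := by
  apply NormedSpace.isCompact_closure_of_isBounded
  · refine hs.subset ?_
    rintro _ ⟨x, hx, rfl⟩
    exact hx
  · intro f _
    obtain ⟨x, hx⟩ := hrefl f
    exact ⟨toWeakSpace ℝ E x, hx⟩

theorem closure_toWeakSpace_image_subset (s : Set E) :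
    closure (toWeakSpace ℝ E '' s) ⊆
      toWeakSpace ℝ E '' closure (Submodule.span ℝ s : Set E) := by
  rw [Convex.toWeakSpace_closure ℝ (Submodule.convex _)]
  exact closure_mono (Set.image_mono Submodule.subset_span)

theorem continuous_dual_toWeakSpace_symm (g : StrongDual ℝ E) :
    Continuous fun x : WeakSpace ℝ E => g ((toWeakSpace ℝ E).symm x) :=
  WeakBilin.eval_continuous _ g

/-- Countably many functionals separate the points of the closed span of `s`, which is also weakly
closed. -/
theorem metrizableSpace_closure_toWeakSpace_image {s : Set E}
    (hs : TopologicalSpace.IsSeparable s)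
    (hcompact : IsCompact (closure (toWeakSpace ℝ E '' s))) :
    TopologicalSpace.MetrizableSpace (closure (toWeakSpace ℝ E '' s)) := by
  set V : Submodule ℝ E := (Submodule.span ℝ s).topologicalClosure with hV
  have hmem (x : closure (toWeakSpace ℝ E '' s)) : (toWeakSpace ℝ E).symm x.1 ∈ V := by
    obtain ⟨y, hy, hyx⟩ := closure_toWeakSpace_image_subset s x.2
    rw [← hyx, LinearEquiv.symm_apply_apply]
    exact hy
  obtain ⟨ℓ, hℓ⟩ := exists_seq_dual_separating (s := (V : Set E)) <| by
    rw [hV, Submodule.topologicalClosure_coe]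
    exact hs.span.closure
  have := isCompact_iff_compactSpace.1 hcompact
  refine Metric.PiNatEmbed.TopologicalSpace.MetrizableSpace.of_countable_separating
    (fun n (x : closure (toWeakSpace ℝ E '' s)) => ℓ n ((toWeakSpace ℝ E).symm x.1))
    (fun n => (continuous_dual_toWeakSpace_symm (ℓ n)).comp continuous_subtype_val)
    fun x y hxy => ?_
  by_contra! h
  have hdiff := hℓ _ (V.sub_mem (hmem x) (hmem y)) fun k => by rw [map_sub, h k, sub_self]
  exact hxy (Subtype.ext ((toWeakSpace ℝ E).symm.injective (sub_eq_zero.1 hdiff)))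

/-- One half of the Eberlein–Šmulian theorem. -/
theorem exists_subseq_tendsto_weakly
    (hrefl : Function.Surjective (NormedSpace.inclusionInDoubleDual ℝ E))
    {q : ℕ → E} {C : ℝ} (hq : ∀ n, ‖q n‖ ≤ C) :
    ∃ (z : E) (ψ : ℕ → ℕ), StrictMono ψ ∧
      ∀ ℓ : StrongDual ℝ E, Tendsto (fun n => ℓ (q (ψ n))) atTop (𝓝 (ℓ z)) := by
  have hbdd : Bornology.IsBounded (Set.range q) :=
    isBounded_iff_forall_norm_le.2 ⟨C, Set.forall_mem_range.2 hq⟩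
  have hcompact := isCompact_closure_toWeakSpace_image hrefl hbdd
  have := isCompact_iff_compactSpace.1 hcompact
  have := metrizableSpace_closure_toWeakSpace_image (Set.countable_range q).isSeparable hcompact
  obtain ⟨z, ψ, hψ, hlim⟩ := CompactSpace.tendsto_subseq
    fun n => (⟨toWeakSpace ℝ E (q n), subset_closure ⟨q n, ⟨n, rfl⟩, rfl⟩⟩ :
      closure (toWeakSpace ℝ E '' Set.range q))
  refine ⟨(toWeakSpace ℝ E).symm z, ψ, hψ, fun ℓ => ?_⟩
  exact (((continuous_dual_toWeakSpace_symm ℓ).comp continuous_subtype_val).tendsto z).comp hlim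

end WeakCompactness

section FanCochain

variable {κ : Type*} [DecidableEq κ]

/-- The signed colour with the opposite sign. -/
def flipSign {κ : Type*} (x : κ × Bool) : κ × Bool := (x.1, !x.2)

/-- Fan's antipodal cochain on multisets of signed colours, for the ordered palette `Λ`: it counts
the multisets in which every colour `j` of `Λ` occurs at most once and, if so, with the sign that
alternates with the number of colours present after `j`. -/
def fanCochain : List κ → Multiset (κ × Bool) → ZMod 2
  | [], σ => if σ = 0 then 1 else 0
  | j :: Λ, σ =>
    let A := σ.filter (·.1 = j)
    let B := σ.filter (·.1 ≠ j)
    if A = 0 ∨ A = {(j, decide (Even B.card))} then fanCochain Λ B else 0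

theorem fanCochain_zero (Λ : List κ) : fanCochain Λ 0 = 1 := by
  induction Λ with
  | nil => simp [fanCochain]
  | cons j Λ ih => simp [fanCochain, ih]

theorem card_le_length_of_fanCochain_ne_zero {Λ : List κ} {σ : Multiset (κ × Bool)}
    (h : fanCochain Λ σ ≠ 0) : σ.card ≤ Λ.length := by
  induction Λ generalizing σ with
  | nil =>
    rw [fanCochain, ne_eq, ite_eq_right_iff, Classical.not_imp] at h
    simp [h.1]
  | cons j Λ ih =>
    simp only [fanCochain, ne_eq, ite_eq_right_iff, Classical.not_imp] at h
    have hA : (σ.filter (·.1 = j)).card ≤ 1 := by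
      rcases h.1 with h | h <;> simp [h]
    have hB := ih h.2
    rw [← Multiset.filter_add_not (·.1 = j) σ, Multiset.card_add, List.length_cons]
    omega

theorem fanCochain_cons_replicate_add {Λ : List κ} {j : κ} {b : Bool} {k : ℕ}
    {B : Multiset (κ × Bool)} (hB : ∀ x ∈ B, x.1 ≠ j) :
    fanCochain (j :: Λ) (Multiset.replicate k (j, b) + B) =
      if k = 0 ∨ k = 1 ∧ b = decide (Even B.card) then fanCochain Λ B else 0 := by
  have hsame :
      (Multiset.replicate k (j, b) + B).filter (·.1 = j) = Multiset.replicate k (j, b) := by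
    rw [Multiset.filter_add, Multiset.filter_eq_nil.2 hB, add_zero, Multiset.filter_eq_self]
    exact fun x hx => by rw [Multiset.eq_of_mem_replicate hx]
  have hother : (Multiset.replicate k (j, b) + B).filter (·.1 ≠ j) = B := by
    rw [Multiset.filter_add, Multiset.filter_eq_self.2 hB, add_eq_right, Multiset.filter_eq_nil]
    exact fun x hx => by rw [Multiset.eq_of_mem_replicate hx]; exact not_not.2 rfl
  have hsingle (c : Bool) : Multiset.replicate k (j, b) = {(j, c)} ↔ k = 1 ∧ b = c := by
    refine ⟨fun h => ?_, fun ⟨hk, hb⟩ => by rw [hk, hb, Multiset.replicate_one]⟩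
    obtain rfl : k = 1 := by simpa using congrArg Multiset.card h
    simpa using h
  have hempty : Multiset.replicate k (j, b) = 0 ↔ k = 0 := by
    rw [← Multiset.card_eq_zero, Multiset.card_replicate]
  simp only [fanCochain, hsame, hother, hsingle, hempty]

theorem exists_eq_replicate_add_of_no_opposite {κ : Type*} {σ : Multiset (κ × Bool)} (j : κ)
    (hσ : ¬((j, true) ∈ σ ∧ (j, false) ∈ σ)) :
    ∃ (k : ℕ) (b : Bool) (B : Multiset (κ × Bool)),
      (∀ x ∈ B, x.1 ≠ j) ∧ σ = Multiset.replicate k (j, b) + B := by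
  classical
  have hb : ∀ x ∈ σ.filter (·.1 = j), x = (j, decide ((j, true) ∈ σ)) := by
    rintro ⟨i, b⟩ hx
    obtain ⟨hx, rfl⟩ := Multiset.mem_filter.1 hx
    cases b <;> simp_all
  refine ⟨(σ.filter (·.1 = j)).card, decide ((j, true) ∈ σ), σ.filter (·.1 ≠ j),
    fun x hx => (Multiset.mem_filter.1 hx).2, ?_⟩
  rw [← Multiset.eq_replicate_card.2 hb, Multiset.filter_add_not]

theorem sum_map_erase_add {α M : Type*} [DecidableEq α] [AddCommMonoid M]
    (f : Multiset α → M) (A B : Multiset α) :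
    ((A + B).map fun v => f ((A + B).erase v)).sum =
      (A.map fun v => f (A.erase v + B)).sum + (B.map fun v => f (A + B.erase v)).sum := by
  rw [Multiset.map_add, Multiset.sum_add]
  congr 2 <;> refine Multiset.map_congr rfl fun v hv => ?_
  · rw [Multiset.erase_add_left_pos _ hv]
  · rw [Multiset.erase_add_right_pos _ hv]

theorem sum_map_erase_replicate_add {α M : Type*} [DecidableEq α] [AddCommMonoid M]
    (f : Multiset α → M) (k : ℕ) (a : α) (B : Multiset α) :
    ((Multiset.replicate k a + B).map fun v => f ((Multiset.replicate k a + B).erase v)).sum =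
      k • f (Multiset.replicate (k - 1) a + B) +
        (B.map fun v => f (Multiset.replicate k a + B.erase v)).sum := by
  rw [sum_map_erase_add, Multiset.map_replicate, Multiset.sum_replicate]
  cases k <;> simp

theorem fanCochain_cons_coboundary {Λ : List κ} {j : κ} {b : Bool} {k : ℕ}
    {B : Multiset (κ × Bool)} (hB : ∀ x ∈ B, x.1 ≠ j)
    (hsum : (B.map fun v => fanCochain Λ (B.erase v)).sum =
      fanCochain Λ B + fanCochain Λ (B.map flipSign)) :
    ((Multiset.replicate k (j, b) + B).map fun v =>
        fanCochain (j :: Λ) ((Multiset.replicate k (j, b) + B).erase v)).sum =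
      fanCochain (j :: Λ) (Multiset.replicate k (j, b) + B) +
        fanCochain (j :: Λ) ((Multiset.replicate k (j, b) + B).map flipSign) := by
  have hBflip : ∀ x ∈ B.map flipSign, x.1 ≠ j := by
    intro x hx
    obtain ⟨y, hy, rfl⟩ := Multiset.mem_map.1 hx
    exact hB y hy
  have hflip : (Multiset.replicate k (j, b) + B).map flipSign =
      Multiset.replicate k (j, !b) + B.map flipSign := by
    simp [flipSign, Multiset.map_replicate]
  have herase : B.map (fun v => fanCochain (j :: Λ) (Multiset.replicate k (j, b) + B.erase v)) =
      B.map fun v => if k = 0 ∨ k = 1 ∧ b = !decide (Even B.card) then fanCochain Λ (B.erase v)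
        else 0 := by
    refine Multiset.map_congr rfl fun v hv => ?_
    rw [fanCochain_cons_replicate_add fun x hx => hB x (Multiset.mem_of_mem_erase hx),
      ← Multiset.card_erase_add_one hv]
    simp only [Nat.even_add_one, decide_not, Bool.not_not]
  rw [sum_map_erase_replicate_add, hflip, fanCochain_cons_replicate_add hB, herase,
    fanCochain_cons_replicate_add hB, fanCochain_cons_replicate_add hBflip, Multiset.card_map]
  match k with
  | 0 => simpa using hsum
  | 1 =>
    rcases Bool.eq_or_eq_not b (decide (Even B.card)) with rfl | rfl
    · simp
    · simp [hsum, ← add_assoc, CharTwo.add_self_eq_zero]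
  | k + 2 =>
    rcases k.eq_zero_or_pos with rfl | hk
    · simp [two_smul, CharTwo.add_self_eq_zero]
    · simp [hk.ne']

theorem fanCochain_coboundary {Λ : List κ} {σ : Multiset (κ × Bool)} (hΛ : ∀ x ∈ σ, x.1 ∈ Λ)
    (hσ : ∀ j, ¬((j, true) ∈ σ ∧ (j, false) ∈ σ)) :
    (σ.map fun v => fanCochain Λ (σ.erase v)).sum =
      fanCochain Λ σ + fanCochain Λ (σ.map flipSign) := by
  induction Λ generalizing σ with
  | nil =>
    obtain rfl : σ = 0 := Multiset.eq_zero_of_forall_notMem fun x hx => by simpa using hΛ x hx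
    simp [fanCochain, CharTwo.add_self_eq_zero]
  | cons j Λ ih =>
    obtain ⟨k, b, B, hB, rfl⟩ := exists_eq_replicate_add_of_no_opposite j (hσ j)
    refine fanCochain_cons_coboundary hB (ih (fun x hx => ?_) fun i hi => ?_)
    · exact (List.mem_cons.1 (hΛ x (Multiset.mem_add.2 (.inr hx)))).resolve_left (hB x hx)
    · exact hσ i (hi.imp (fun h => Multiset.mem_add.2 (.inr h))
        fun h => Multiset.mem_add.2 (.inr h))

end FanCochain

section SimplicialChains

/-- Simplicial chains modulo 2 with vertices in `E`; a simplex is the multiset of its vertices. -/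
abbrev SimplicialChain (E : Type*) : Type _ := Multiset E →₀ ZMod 2

/-- The chains all of whose simplices belong to `A`. -/
abbrev chainsOn {E : Type*} (A : Set (Multiset E)) : Submodule (ZMod 2) (SimplicialChain E) :=
  Finsupp.supported (ZMod 2) (ZMod 2) A

/-- The augmented simplicial boundary: the empty simplex is a face of each vertex. -/
def boundary {E : Type*} [DecidableEq E] : Module.End (ZMod 2) (SimplicialChain E) :=
  Finsupp.linearCombination (ZMod 2) fun s => (s.map fun v => Finsupp.single (s.erase v) 1).sum

/-- The join of a chain with the apex `x`. -/
def cone {E : Type*} (x : E) : Module.End (ZMod 2) (SimplicialChain E) :=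
  Finsupp.lmapDomain (ZMod 2) (ZMod 2) (x ::ₘ ·)

/-- The action of `x ↦ -x` on chains. -/
def antipode {E : Type*} [Neg E] : Module.End (ZMod 2) (SimplicialChain E) :=
  Finsupp.lmapDomain (ZMod 2) (ZMod 2) (Multiset.map Neg.neg)

theorem chainHom_ext {E M : Type*} [AddCommMonoid M] [Module (ZMod 2) M]
    {f g : SimplicialChain E →ₗ[ZMod 2] M}
    (h : ∀ s, f (Finsupp.single s 1) = g (Finsupp.single s 1)) : f = g :=
  Finsupp.lhom_ext' fun s => LinearMap.ext_ring (h s)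

theorem chainsOn_eq_span {E : Type*} (A : Set (Multiset E)) :
    chainsOn A = Submodule.span (ZMod 2) ((fun s => Finsupp.single s 1) '' A) :=
  Finsupp.supported_eq_span_single _ A

theorem map_mem_of_mem_chainsOn {E M : Type*} [AddCommMonoid M] [Module (ZMod 2) M]
    {A : Set (Multiset E)} {f : SimplicialChain E →ₗ[ZMod 2] M} {N : Submodule (ZMod 2) M}
    (h : ∀ s ∈ A, f (Finsupp.single s 1) ∈ N) {c : SimplicialChain E} (hc : c ∈ chainsOn A) :
    f c ∈ N := by
  rw [chainsOn_eq_span] at hc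
  exact (Submodule.span_le (p := N.comap f)).2 (Set.forall_mem_image.2 h) hc

theorem single_mem_chainsOn {E : Type*} {A : Set (Multiset E)} {s : Multiset E} (hs : s ∈ A) :
    Finsupp.single s 1 ∈ chainsOn A :=
  Finsupp.single_mem_supported _ _ hs

theorem eq_of_mem_chainsOn {E M : Type*} [AddCommMonoid M] [Module (ZMod 2) M]
    {A : Set (Multiset E)} {f g : SimplicialChain E →ₗ[ZMod 2] M}
    (h : ∀ s ∈ A, f (Finsupp.single s 1) = g (Finsupp.single s 1)) {c : SimplicialChain E}
    (hc : c ∈ chainsOn A) : f c = g c := by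
  rw [chainsOn_eq_span] at hc
  exact LinearMap.eqOn_span (Set.forall_mem_image.2 h) hc

@[simp]
theorem boundary_single {E : Type*} [DecidableEq E] (s : Multiset E) :
    boundary (Finsupp.single s 1) =
      (s.map fun v => Finsupp.single (s.erase v) (1 : ZMod 2)).sum := by
  simp [boundary]

@[simp]
theorem cone_single {E : Type*} (x : E) (s : Multiset E) :
    cone x (Finsupp.single s 1) = Finsupp.single (x ::ₘ s) 1 := by
  simp [cone]

@[simp]
theorem antipode_single {E : Type*} [Neg E] (s : Multiset E) :
    antipode (Finsupp.single s 1) = Finsupp.single (s.map Neg.neg) 1 := by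
  simp [antipode]

theorem cone_mem_chainsOn {E : Type*} {A B : Set (Multiset E)} {x : E}
    (h : ∀ s ∈ A, x ::ₘ s ∈ B) {c : SimplicialChain E} (hc : c ∈ chainsOn A) :
    cone x c ∈ chainsOn B :=
  map_mem_of_mem_chainsOn (fun s hs => by simpa using single_mem_chainsOn (h s hs)) hc

theorem antipode_mem_chainsOn {E : Type*} [Neg E] {A B : Set (Multiset E)}
    (h : ∀ s ∈ A, s.map Neg.neg ∈ B) {c : SimplicialChain E} (hc : c ∈ chainsOn A) :
    antipode c ∈ chainsOn B :=
  map_mem_of_mem_chainsOn (fun s hs => by simpa using single_mem_chainsOn (h s hs)) hc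

theorem boundary_cone {E : Type*} [DecidableEq E] (x : E) (c : SimplicialChain E) :
    boundary (cone x c) = c + cone x (boundary c) := by
  suffices boundary ∘ₗ cone x = LinearMap.id + cone x ∘ₗ boundary from LinearMap.congr_fun this c
  refine chainHom_ext fun s => ?_
  have herase : s.map (fun v => Finsupp.single ((x ::ₘ s).erase v) (1 : ZMod 2)) =
      s.map fun v => cone x (Finsupp.single (s.erase v) 1) :=
    Multiset.map_congr rfl fun v hv => by rw [cone_single, Multiset.erase_cons_tail_of_mem hv]
  simp [map_multiset_sum, herase]

theorem boundary_boundary {E : Type*} [DecidableEq E] (c : SimplicialChain E) :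
    boundary (boundary c) = 0 := by
  suffices boundary ∘ₗ boundary (E := E) = 0 from LinearMap.congr_fun this c
  refine chainHom_ext fun s => ?_
  simp only [LinearMap.comp_apply, LinearMap.zero_apply]
  induction s using Multiset.induction with
  | empty => simp
  | cons x s ih =>
    rw [← cone_single, boundary_cone, map_add, boundary_cone, ih, map_zero, add_zero,
      ZModModule.add_self]

theorem antipode_antipode {E : Type*} [InvolutiveNeg E] (c : SimplicialChain E) :
    antipode (antipode c) = c := by
  suffices antipode ∘ₗ antipode (E := E) = LinearMap.id from LinearMap.congr_fun this c
  exact chainHom_ext fun s => by simp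

theorem antipode_cone {E : Type*} [Neg E] (x : E) (c : SimplicialChain E) :
    antipode (cone x c) = cone (-x) (antipode c) := by
  suffices antipode ∘ₗ cone x = cone (-x) ∘ₗ antipode from LinearMap.congr_fun this c
  exact chainHom_ext fun s => by simp

theorem cone_cone {E : Type*} (x y : E) (c : SimplicialChain E) :
    cone x (cone y c) = cone y (cone x c) := by
  suffices cone x ∘ₗ cone y = cone y ∘ₗ cone x from LinearMap.congr_fun this c
  exact chainHom_ext fun s => by simp [Multiset.cons_swap x y]

theorem boundary_antipode {E : Type*} [DecidableEq E] [InvolutiveNeg E] (c : SimplicialChain E) :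
    boundary (antipode c) = antipode (boundary c) := by
  suffices boundary ∘ₗ antipode = antipode ∘ₗ boundary (E := E) from LinearMap.congr_fun this c
  exact chainHom_ext fun s => by
    simp [map_multiset_sum, Multiset.map_erase _ neg_injective]

end SimplicialChains

section BarycentricSubdivision

variable {E : Type*}

/-- The barycentre of a simplex; it is `0` for the empty simplex. -/
def barycenter [AddCommGroup E] [Module ℝ E] (s : Multiset E) : E := (s.card : ℝ)⁻¹ • s.sum

theorem barycenter_map_neg [AddCommGroup E] [Module ℝ E] (s : Multiset E) :
    barycenter (s.map Neg.neg) = -barycenter s := by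
  rw [barycenter, barycenter, Multiset.card_map, Multiset.sum_map_neg, smul_neg, Multiset.map_id']

theorem barycenter_mem [AddCommGroup E] [Module ℝ E] {K : Set E} (hK : Convex ℝ K)
    {s : Multiset E} (hs : s ≠ 0) (hsK : ∀ v ∈ s, v ∈ K) : barycenter s ∈ K := by
  induction s using Multiset.induction with
  | empty => exact absurd rfl hs
  | cons x s ih =>
    have hx : x ∈ K := hsK x (Multiset.mem_cons_self x s)
    rcases eq_or_ne s 0 with rfl | h0
    · simpa [barycenter] using hx
    have hs := ih h0 fun v hv => hsK v (Multiset.mem_cons_of_mem hv)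
    have hpos : (0 : ℝ) < s.card := mod_cast Multiset.card_pos.2 h0
    convert hK hx hs (a := (s.card + 1 : ℝ)⁻¹) (b := s.card / (s.card + 1)) (by positivity)
      (by positivity) (by field_simp; ring) using 1
    rw [barycenter, barycenter, Multiset.sum_cons, Multiset.card_cons, smul_smul, smul_add]
    congr 2
    · push_cast; rfl
    · push_cast; field_simp

theorem norm_barycenter_sub_le [NormedAddCommGroup E] [NormedSpace ℝ E] {n : ℕ} {s : Multiset E}
    (hn : s.card ≤ n + 1) {d : ℝ} (hd : ∀ v ∈ s, ∀ w ∈ s, ‖v - w‖ ≤ d) {v : E} (hv : v ∈ s) :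
    ‖barycenter s - v‖ ≤ n / (n + 1) * d := by
  obtain ⟨t, rfl⟩ := Multiset.exists_cons_of_mem hv
  have hd0 : 0 ≤ d := (norm_nonneg _).trans (hd v hv v hv)
  have hbary : barycenter (v ::ₘ t) - v = (t.card + 1 : ℝ)⁻¹ • (t.map (· - v)).sum := by
    have hcard : (t.card + 1 : ℝ) ≠ 0 := by positivity
    rw [eq_inv_smul_iff₀ hcard, smul_sub, barycenter, Multiset.card_cons, Nat.cast_add_one,
      smul_inv_smul₀ hcard, Multiset.sum_map_sub, Multiset.map_id', Multiset.map_const',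
      Multiset.sum_replicate, Multiset.sum_cons, add_smul, Nat.cast_smul_eq_nsmul]
    module
  have hsum : ‖(t.map (· - v)).sum‖ ≤ t.card * d := by
    refine (norm_multiset_sum_le _).trans ?_
    rw [← nsmul_eq_mul, ← Multiset.card_map (· - v) t, ← Multiset.card_map norm (t.map _)]
    refine Multiset.sum_le_card_nsmul _ _ fun x hx => ?_
    simp only [Multiset.map_map, Multiset.mem_map] at hx
    obtain ⟨w, hw, rfl⟩ := hx
    exact hd w (Multiset.mem_cons_of_mem hw) v hv
  have htn : (t.card : ℝ) ≤ n := by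
    rw [Multiset.card_cons] at hn
    exact_mod_cast Nat.le_of_succ_le_succ hn
  rw [hbary, norm_smul, norm_inv, Real.norm_of_nonneg (by positivity)]
  calc (t.card + 1 : ℝ)⁻¹ * ‖(t.map (· - v)).sum‖
      ≤ (t.card + 1 : ℝ)⁻¹ * (t.card * d) := by gcongr
    _ = t.card / (t.card + 1) * d := by ring
    _ ≤ n / (n + 1) * d := by
      gcongr ?_ * d
      rw [div_le_div_iff₀ (by positivity) (by positivity)]
      linarith

variable [DecidableEq E]

/-- The barycentric subdivision of a simplex: the cone from its barycentre over the subdivision of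
its boundary. -/
def subdivideSimplex [AddCommGroup E] [Module ℝ E] (s : Multiset E) : SimplicialChain E :=
  if s = 0 then Finsupp.single 0 1
  else cone (barycenter s) (s.attach.map fun v : { x // x ∈ s } => subdivideSimplex (s.erase v)).sum
termination_by s.card
decreasing_by exact Multiset.card_erase_lt_of_mem v.2

/-- Barycentric subdivision of chains. -/
def subdivide [AddCommGroup E] [Module ℝ E] : Module.End (ZMod 2) (SimplicialChain E) :=
  Finsupp.linearCombination (ZMod 2) subdivideSimplex

section Algebraic

variable [AddCommGroup E] [Module ℝ E]

theorem subdivide_single_zero :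
    subdivide (Finsupp.single (0 : Multiset E) 1) = Finsupp.single 0 1 := by
  rw [subdivide, Finsupp.linearCombination_single, one_smul, subdivideSimplex, if_pos rfl]

theorem subdivide_single {s : Multiset E} (hs : s ≠ 0) :
    subdivide (Finsupp.single s 1) =
      cone (barycenter s) (subdivide (boundary (Finsupp.single s 1))) := by
  rw [boundary_single, map_multiset_sum, Multiset.map_map, subdivide]
  simp only [Function.comp_def, Finsupp.linearCombination_single, one_smul]
  rw [subdivideSimplex, if_neg hs, Multiset.attach_map_val' s fun v => subdivideSimplex (s.erase v)]

theorem subdivide_pow_single_singleton (x : E) (N : ℕ) :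
    (subdivide ^ N) (Finsupp.single {x} 1) = Finsupp.single {x} 1 := by
  rw [Module.End.pow_apply]
  refine Function.iterate_fixed ?_ N
  rw [subdivide_single (Multiset.singleton_ne_zero x)]
  simp [subdivide_single_zero, barycenter]

theorem boundary_subdivide : Commute boundary (subdivide (E := E)) := by
  refine chainHom_ext fun s => ?_
  simp only [Module.End.mul_apply]
  induction s using Multiset.strongInductionOn with
  | ih s ih =>
    rcases eq_or_ne s 0 with rfl | hs
    · simp [subdivide_single_zero]
    have hcycle : boundary (subdivide (boundary (Finsupp.single s 1))) = 0 := by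
      rw [← map_zero subdivide, ← boundary_boundary (Finsupp.single s 1), boundary_single]
      simp only [map_multiset_sum, Multiset.map_map, Function.comp_def]
      exact congrArg _ (Multiset.map_congr rfl fun v hv => ih _ (Multiset.erase_lt.2 hv))
    rw [subdivide_single hs, boundary_cone, hcycle, map_zero, add_zero]

theorem antipode_subdivide : Commute antipode (subdivide (E := E)) := by
  refine chainHom_ext fun s => ?_
  simp only [Module.End.mul_apply]
  induction s using Multiset.strongInductionOn with
  | ih s ih =>
    rcases eq_or_ne s 0 with rfl | hs
    · simp [subdivide_single_zero]
    have hface : antipode (subdivide (boundary (Finsupp.single s 1))) =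
        subdivide (antipode (boundary (Finsupp.single s 1))) := by
      rw [boundary_single]
      simp only [map_multiset_sum, Multiset.map_map, Function.comp_def]
      exact congrArg _ (Multiset.map_congr rfl fun v hv => ih _ (Multiset.erase_lt.2 hv))
    rw [subdivide_single hs, antipode_cone, antipode_single,
      subdivide_single (by simpa using hs), barycenter_map_neg, hface, ← boundary_antipode,
      antipode_single]

end Algebraic

variable [NormedAddCommGroup E] [NormedSpace ℝ E]

/-- The simplices with `k` vertices, all in `K` and at mutual distance at most `d`. -/
def simplicesIn (k : ℕ) (K : Set E) (d : ℝ) : Set (Multiset E) :=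
  {s | s.card = k ∧ (∀ v ∈ s, v ∈ K) ∧ ∀ v ∈ s, ∀ w ∈ s, ‖v - w‖ ≤ d}

theorem subdivide_single_mem_chainsOn {n k : ℕ} (hk : k ≤ n + 1) {K : Set E} (hK : Convex ℝ K)
    {d : ℝ} {s : Multiset E} (hs : s ∈ simplicesIn k K d) :
    subdivide (Finsupp.single s 1) ∈ chainsOn (simplicesIn k K (n / (n + 1) * d)) := by
  induction k generalizing K s with
  | zero =>
    obtain rfl : s = 0 := Multiset.card_eq_zero.1 hs.1
    rw [subdivide_single_zero]
    exact single_mem_chainsOn (by simp [simplicesIn])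
  | succ k ih =>
    obtain ⟨hcard, hsK, hsd⟩ := hs
    have hs0 : s ≠ 0 := by rintro rfl; simp at hcard
    have hd : 0 ≤ d := by
      obtain ⟨v, hv⟩ := Multiset.exists_mem_of_ne_zero hs0
      exact (norm_nonneg _).trans (hsd v hv v hv)
    rw [subdivide_single hs0]
    refine cone_mem_chainsOn
      (A := simplicesIn k (K ∩ Metric.closedBall (barycenter s) (n / (n + 1) * d))
        (n / (n + 1) * d)) ?_ ?_
    · rintro t ⟨htcard, htK, htd⟩
      have hdist : ∀ w ∈ t, ‖w - barycenter s‖ ≤ n / (n + 1) * d := fun w hw =>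
        mem_closedBall_iff_norm.1 (htK w hw).2
      refine ⟨by simp [htcard], ?_, ?_⟩
      · simpa [barycenter_mem hK hs0 hsK] using fun v hv => (htK v hv).1
      · simp only [Multiset.mem_cons, forall_eq_or_imp, sub_self, norm_zero]
        exact ⟨⟨by positivity, fun w hw => norm_sub_rev w _ ▸ hdist w hw⟩,
          fun v hv => ⟨hdist v hv, htd v hv⟩⟩
    · rw [boundary_single]
      simp only [map_multiset_sum, Multiset.map_map, Function.comp_def]
      refine multiset_sum_mem _ (Multiset.forall_mem_map_iff.2 fun v hv => ?_)
      refine ih (by omega) (hK.inter (convex_closedBall _ _)) ⟨?_, fun w hw => ⟨?_, ?_⟩, ?_⟩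
      · rw [Multiset.card_erase_of_mem hv, hcard, Nat.pred_succ]
      · exact hsK w (Multiset.mem_of_mem_erase hw)
      · rw [mem_closedBall_iff_norm, norm_sub_rev]
        exact norm_barycenter_sub_le (by omega) hsd (Multiset.mem_of_mem_erase hw)
      · exact fun w hw w' hw' =>
          hsd w (Multiset.mem_of_mem_erase hw) w' (Multiset.mem_of_mem_erase hw')

theorem subdivide_pow_mem_chainsOn {n k : ℕ} (hk : k ≤ n + 1) {K : Set E} (hK : Convex ℝ K)
    {d : ℝ} {c : SimplicialChain E} (hc : c ∈ chainsOn (simplicesIn k K d)) (N : ℕ) :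
    (subdivide ^ N) c ∈ chainsOn (simplicesIn k K ((n / (n + 1)) ^ N * d)) := by
  induction N with
  | zero => simpa using hc
  | succ N ih =>
    rw [pow_succ' subdivide, Module.End.mul_apply, pow_succ', mul_assoc]
    exact map_mem_of_mem_chainsOn (fun s hs => subdivide_single_mem_chainsOn hk hK hs) ih

end BarycentricSubdivision

section AntipodalColoring

/-- An antipodal colouring of `S` at scale `δ` with palette `C`: antipodal points have the same
colour and opposite signs, and points of one colour at distance less than `δ` have the same sign. -/
structure IsAntipodalColoring {E κ : Type*} [NormedAddCommGroup E] (S : Set E) (C : Finset κ)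
    (lab : E → κ × Bool) (δ : ℝ) : Prop where
  mem : ∀ x ∈ S, (lab x).1 ∈ C
  neg : ∀ x ∈ S, lab (-x) = flipSign (lab x)
  sign_eq : ∀ x ∈ S, ∀ y ∈ S, ‖x - y‖ < δ → (lab x).1 = (lab y).1 → lab x = lab y

/-- A uniform version of "`S` has Krasnosel'skii genus at most the cardinality of `C`". -/
def AntipodallyColorable {E κ : Type*} [NormedAddCommGroup E] (S : Set E) (C : Finset κ) : Prop :=
  ∃ (lab : E → κ × Bool) (δ : ℝ), 0 < δ ∧ IsAntipodalColoring S C lab δ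

end AntipodalColoring

section CrossPolytope

variable {E ι : Type*}

/-- The boundary of the cross-polytope with vertices `± v i` for `i` in the list. -/
def crossSphere [Neg E] (v : ι → E) : List ι → SimplicialChain E
  | [] => Finsupp.single 0 1
  | i :: l => cone (v i) (crossSphere v l) + antipode (cone (v i) (crossSphere v l))

theorem antipode_crossSphere [InvolutiveNeg E] (v : ι → E) (l : List ι) :
    antipode (crossSphere v l) = crossSphere v l := by
  cases l with
  | nil => simp [crossSphere]
  | cons i l => rw [crossSphere, map_add, antipode_antipode, add_comm]

theorem boundary_crossSphere [DecidableEq E] [InvolutiveNeg E] (v : ι → E) (l : List ι) :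
    boundary (crossSphere v l) = 0 := by
  induction l with
  | nil => simp [crossSphere]
  | cons i l ih =>
    rw [crossSphere, map_add, boundary_antipode, boundary_cone, ih, map_zero, add_zero,
      antipode_crossSphere, ZModModule.add_self]

variable [AddCommGroup E] [Module ℝ E]

/-- The simplices with vertices `± v i`, one for each `i` in the list. -/
def crossFacets (v : ι → E) (l : List ι) : Set (Multiset E) :=
  {s | ∃ ε : ι → ℝ, (∀ i, |ε i| = 1) ∧ s = l.map fun i => ε i • v i}

theorem cons_mem_crossFacets {v : ι → E} {i : ι} {l : List ι} (hi : i ∉ l) {s : Multiset E}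
    (hs : s ∈ crossFacets v l) : v i ::ₘ s ∈ crossFacets v (i :: l) := by
  classical
  obtain ⟨ε, hε, rfl⟩ := hs
  refine ⟨Function.update ε i 1, fun j => ?_, ?_⟩
  · rcases eq_or_ne j i with rfl | hj <;> simp [*]
  · have hl : l.map (fun j => Function.update ε i 1 j • v j) = l.map fun j => ε j • v j :=
      List.map_congr_left fun j hj => by
        rw [Function.update_of_ne (ne_of_mem_of_not_mem hj hi)]
    simp [hl]

theorem map_neg_mem_crossFacets {v : ι → E} {l : List ι} {s : Multiset E}
    (hs : s ∈ crossFacets v l) : s.map Neg.neg ∈ crossFacets v l := by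
  obtain ⟨ε, hε, rfl⟩ := hs
  exact ⟨-ε, by simpa using hε, by simp [Function.comp_def]⟩

theorem crossSphere_mem_chainsOn {v : ι → E} {l : List ι} (hl : l.Nodup) :
    crossSphere v l ∈ chainsOn (crossFacets v l) := by
  induction l with
  | nil => exact single_mem_chainsOn ⟨1, by simp⟩
  | cons i l ih =>
    have hcone : cone (v i) (crossSphere v l) ∈ chainsOn (crossFacets v (i :: l)) :=
      cone_mem_chainsOn (fun _ => cons_mem_crossFacets hl.notMem) (ih hl.of_cons)
    exact add_mem hcone (antipode_mem_chainsOn (fun _ => map_neg_mem_crossFacets) hcone)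

theorem cone_crossSphere_mem_chainsOn {v : ι → E} {i : ι} {l : List ι} (hl : (i :: l).Nodup) :
    cone (v i) (crossSphere v l) ∈ chainsOn (crossFacets v (i :: l)) :=
  cone_mem_chainsOn (fun _ => cons_mem_crossFacets hl.notMem) (crossSphere_mem_chainsOn hl.of_cons)

end CrossPolytope

section PuncturedFan

variable {E κ : Type*} [DecidableEq κ]

/-- The cochain counting the simplices with exactly one vertex in `O` whose remaining vertices are
counted by Fan's cochain. -/
def puncturedFan (O : Set E) [DecidablePred (· ∈ O)] (lab : E → κ × Bool) (Λ : List κ) :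
    SimplicialChain E →ₗ[ZMod 2] ZMod 2 :=
  Finsupp.linearCombination (ZMod 2) fun s =>
    if (s.filter (· ∈ O)).card = 1 then fanCochain Λ ((s.filter (· ∉ O)).map lab) else 0

variable {O : Set E} [DecidablePred (· ∈ O)] {lab : E → κ × Bool} {Λ : List κ}

theorem puncturedFan_single_add {A t : Multiset E} (hA : ∀ x ∈ A, x ∈ O) (ht : ∀ x ∈ t, x ∉ O) :
    puncturedFan O lab Λ (Finsupp.single (A + t) 1) =
      if A.card = 1 then fanCochain Λ (t.map lab) else 0 := by
  rw [puncturedFan, Finsupp.linearCombination_single, one_smul, Multiset.filter_add,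
    Multiset.filter_add, Multiset.filter_eq_self.2 hA, Multiset.filter_eq_nil.2 ht,
    Multiset.filter_eq_self.2 ht, Multiset.filter_eq_nil.2 fun x hx => not_not.2 (hA x hx),
    add_zero, zero_add]

theorem puncturedFan_single_of_forall_notMem {s : Multiset E} (hs : ∀ x ∈ s, x ∉ O) :
    puncturedFan O lab Λ (Finsupp.single s 1) = 0 := by
  simpa using puncturedFan_single_add (A := 0) (lab := lab) (Λ := Λ) (by simp) hs

theorem puncturedFan_single_of_length_lt {s : Multiset E} (hs : Λ.length + 1 < s.card) :
    puncturedFan O lab Λ (Finsupp.single s 1) = 0 := by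
  rw [puncturedFan, Finsupp.linearCombination_single, one_smul, ite_eq_right_iff]
  intro h1
  by_contra h
  have hcard := card_le_length_of_fanCochain_ne_zero h
  rw [Multiset.card_map] at hcard
  rw [← Multiset.filter_add_not (· ∈ O) s, Multiset.card_add] at hs
  omega

theorem puncturedFan_boundary_single_add [DecidableEq E] {A t : Multiset E}
    (hA : ∀ x ∈ A, x ∈ O) (ht : ∀ x ∈ t, x ∉ O) :
    puncturedFan O lab Λ (boundary (Finsupp.single (A + t) 1)) =
      if A.card = 1 then (t.map fun v => fanCochain Λ ((t.erase v).map lab)).sum else 0 := by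
  have hAfaces : A.map (fun v => puncturedFan O lab Λ (Finsupp.single (A.erase v + t) 1)) =
      A.map fun _ => if A.card = 2 then fanCochain Λ (t.map lab) else 0 := by
    refine Multiset.map_congr rfl fun v hv => ?_
    rw [puncturedFan_single_add (fun x hx => hA x (Multiset.mem_of_mem_erase hx)) ht,
      ← Multiset.card_erase_add_one hv]
    simp
  have htfaces : t.map (fun v => puncturedFan O lab Λ (Finsupp.single (A + t.erase v) 1)) =
      t.map fun v => if A.card = 1 then fanCochain Λ ((t.erase v).map lab) else 0 :=
    Multiset.map_congr rfl fun v _ =>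
      puncturedFan_single_add hA fun x hx => ht x (Multiset.mem_of_mem_erase hx)
  rw [boundary_single, map_multiset_sum, Multiset.map_map, Function.comp_def,
    sum_map_erase_add fun s => puncturedFan O lab Λ (Finsupp.single s 1), hAfaces, htfaces,
    Multiset.map_const', Multiset.sum_replicate]
  have hpair : A.card • (if A.card = 2 then fanCochain Λ (t.map lab) else 0) = 0 := by
    split_ifs with h
    · rw [h, two_smul, CharTwo.add_self_eq_zero]
    · exact smul_zero _
  rw [hpair, zero_add]
  split_ifs <;> simp

theorem puncturedFan_coboundary_single {E : Type*} [NormedAddCommGroup E] [DecidableEq E]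
    {O : Set E} [DecidablePred (· ∈ O)] (hO : ∀ x ∈ O, -x ∈ O) {C : Finset κ}
    {lab : E → κ × Bool} {ρ δ : ℝ}
    (hlab : IsAntipodalColoring (Metric.thickening ρ O \ O) C lab δ) {s : Multiset E}
    (hs : ∀ x ∈ s, ∀ y ∈ s, ‖x - y‖ < min ρ δ) :
    puncturedFan O lab C.toList (boundary (Finsupp.single s 1)) =
      puncturedFan O lab C.toList (Finsupp.single s 1) +
        puncturedFan O lab C.toList (antipode (Finsupp.single s 1)) := by
  obtain ⟨A, t, hA, ht, rfl⟩ : ∃ A t, (∀ x ∈ A, x ∈ O) ∧ (∀ x ∈ t, x ∉ O) ∧ s = A + t :=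
    ⟨s.filter (· ∈ O), s.filter (· ∉ O), fun x hx => (Multiset.mem_filter.1 hx).2,
      fun x hx => (Multiset.mem_filter.1 hx).2, (Multiset.filter_add_not _ _).symm⟩
  rw [puncturedFan_boundary_single_add hA ht, puncturedFan_single_add hA ht, antipode_single,
    Multiset.map_add, puncturedFan_single_add (A := A.map Neg.neg)
      (by simpa using fun x hx => hO x (hA x hx))
      (by simpa using fun x hx h => ht x hx (neg_neg x ▸ hO _ h)), Multiset.card_map]
  split_ifs with hcard
  swap; · exact (add_zero 0).symm
  obtain ⟨o, rfl⟩ := Multiset.card_eq_one.1 hcard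
  have hnear : ∀ x ∈ t, x ∈ Metric.thickening ρ O \ O := fun x hx =>
    ⟨Metric.mem_thickening_iff.2 ⟨o, hA o (by simp), by
      rw [dist_eq_norm]; exact (hs x (by simp [hx]) o (by simp)).trans_le (min_le_left _ _)⟩,
      ht x hx⟩
  have hflip : (t.map Neg.neg).map lab = (t.map lab).map flipSign := by
    rw [Multiset.map_map, Multiset.map_map]
    exact Multiset.map_congr rfl fun x hx => hlab.neg x (hnear x hx)
  have herase : t.map (fun v => fanCochain C.toList ((t.erase v).map lab)) =
      (t.map lab).map fun w => fanCochain C.toList ((t.map lab).erase w) := by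
    rw [Multiset.map_map]
    refine Multiset.map_congr rfl fun v hv => ?_
    obtain ⟨t', rfl⟩ := Multiset.exists_cons_of_mem hv
    simp
  rw [hflip, herase]
  refine fanCochain_coboundary (by simpa using fun x hx => hlab.mem x (hnear x hx)) fun j hj => ?_
  obtain ⟨⟨x, hx, hxj⟩, y, hy, hyj⟩ := hj.imp Multiset.mem_map.1 Multiset.mem_map.1
  have hxy := hlab.sign_eq x (hnear x hx) y (hnear y hy)
    ((hs x (by simp [hx]) y (by simp [hy])).trans_le (min_le_right _ _)) (by rw [hxj, hyj])
  simp [hxj, hyj] at hxy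

end PuncturedFan

section BorsukUlam

theorem map_cone_zero_crossSphere {E ι : Type*} [AddCommGroup E] [DecidableEq E] {v : ι → E}
    {Θ : SimplicialChain E →ₗ[ZMod 2] ZMod 2} (hzero : Θ (Finsupp.single {0} 1) = 1)
    (hfacet : ∀ i l, (i :: l).Nodup → Θ (cone (v i) (crossSphere v l)) = 0)
    (hcob : ∀ i l, (i :: l).Nodup → Θ (boundary (cone (v i) (cone 0 (crossSphere v l)))) =
      Θ (cone (v i) (cone 0 (crossSphere v l))) +
        Θ (antipode (cone (v i) (cone 0 (crossSphere v l))))) {l : List ι} (hl : l.Nodup) :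
    Θ (cone 0 (crossSphere v l)) = 1 := by
  induction l with
  | nil => simpa [crossSphere] using hzero
  | cons i l ih =>
    have hhalves : cone 0 (crossSphere v (i :: l)) = cone (v i) (cone 0 (crossSphere v l)) +
        antipode (cone (v i) (cone 0 (crossSphere v l))) := by
      rw [crossSphere, map_add, cone_cone (v i) 0, antipode_cone 0, neg_zero]
    calc Θ (cone 0 (crossSphere v (i :: l)))
        = Θ (boundary (cone (v i) (cone 0 (crossSphere v l)))) := by
          rw [hhalves, map_add, hcob i l hl]
      _ = Θ (cone 0 (crossSphere v l)) + Θ (cone (v i) (crossSphere v l)) := by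
          rw [boundary_cone, boundary_cone, boundary_crossSphere, map_zero, add_zero, map_add]
      _ = 1 := by rw [ih hl.of_cons, hfacet i l hl, add_zero]

theorem mem_simplicesIn_of_norm_le {E : Type*} [NormedAddCommGroup E] {k : ℕ} {K : Set E} {r : ℝ}
    {s : Multiset E} (hk : s.card = k) (hK : ∀ v ∈ s, v ∈ K) (hr : ∀ v ∈ s, ‖v‖ ≤ r) :
    s ∈ simplicesIn k K (2 * r) :=
  ⟨hk, hK, fun v hv w hw => (norm_sub_le v w).trans (by linarith [hr v hv, hr w hw])⟩

section Facets

variable {E ι κ : Type*} [NormedAddCommGroup E] [NormedSpace ℝ E]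

theorem norm_le_of_mem_crossFacets {v : ι → E} {r : ℝ} (hv : ∀ i, ‖v i‖ ≤ r) {l : List ι}
    {s : Multiset E} (hs : s ∈ crossFacets v l) {x : E} (hx : x ∈ s) : ‖x‖ ≤ r := by
  obtain ⟨ε, hε, rfl⟩ := hs
  obtain ⟨i, -, rfl⟩ := List.mem_map.1 (Multiset.mem_coe.1 hx)
  rw [norm_smul, Real.norm_eq_abs, hε, one_mul]
  exact hv i

theorem cone_zero_crossSphere_mem_chainsOn {v : ι → E} {r : ℝ} (hr : 0 ≤ r)
    (hv : ∀ i, ‖v i‖ ≤ r) {l : List ι} (hl : l.Nodup) :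
    cone 0 (crossSphere v l) ∈
      chainsOn {s | s.card = l.length + 1 ∧ ∀ x ∈ s, ‖x‖ ≤ r} := by
  refine cone_mem_chainsOn (fun s hs => ?_) (crossSphere_mem_chainsOn hl)
  refine ⟨?_, ?_⟩
  · obtain ⟨ε, -, rfl⟩ := hs
    simp
  · simpa [hr] using fun x => norm_le_of_mem_crossFacets hv hs

variable [DecidableEq E] [DecidableEq κ] {O : Set E} [DecidablePred (· ∈ O)] {lab : E → κ × Bool}
  {Λ : List κ}

theorem puncturedFan_subdivide_pow_crossFacets [Fintype ι] (b : Module.Basis ι ℝ E) {R : ℝ}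
    (hR : ∀ x ∈ O, ∑ i, |b.repr x i| < R) {l : List ι} {c : SimplicialChain E}
    (hc : c ∈ chainsOn (crossFacets (fun i => R • b i) l)) (N : ℕ) :
    puncturedFan O lab Λ ((subdivide ^ N) c) = 0 := by
  classical
  suffices c ∈ LinearMap.ker (puncturedFan O lab Λ ∘ₗ subdivide ^ N) from this
  refine map_mem_of_mem_chainsOn (f := LinearMap.id) (fun s hs => ?_) hc
  obtain ⟨r, hr⟩ : ∃ r, ∀ i, ‖R • b i‖ ≤ r :=
    (Set.finite_range fun i => ‖R • b i‖).bddAbove.imp fun r hr i => hr ⟨i, rfl⟩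
  have hnorm : ∀ x ∈ s, ‖x‖ ≤ r := fun x => norm_le_of_mem_crossFacets hr hs
  obtain ⟨ε, hε, rfl⟩ := hs
  let f : E →ₗ[ℝ] ℝ := ∑ i, ε i • b.coord i
  have hface : ∀ x ∈ (l.map fun i => ε i • R • b i : Multiset E), x ∈ {x | f x = R} := by
    have hsq (i : ι) : ε i * ε i = 1 := by rw [← abs_mul_abs_self, hε, one_mul]
    simpa [f, Finsupp.single_apply] using fun i _ => by rw [← mul_assoc, hsq, one_mul]
  have hmiss : ∀ x ∈ {x | f x = R}, x ∉ O := by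
    rintro x (hx : f x = R) hxO
    refine (hR x hxO).not_ge ?_
    rw [← hx]
    simp only [f, LinearMap.sum_apply, LinearMap.smul_apply, Module.Basis.coord_apply, smul_eq_mul]
    exact Finset.sum_le_sum fun i _ => (le_abs_self _).trans_eq (by rw [abs_mul, hε, one_mul])
  have hK : Convex ℝ {x | f x = R} := convex_hyperplane f.isLinear R
  have hfine := subdivide_pow_mem_chainsOn (Nat.le_succ _) hK
    (single_mem_chainsOn (mem_simplicesIn_of_norm_le rfl hface hnorm)) N
  exact map_mem_of_mem_chainsOn (f := puncturedFan O lab Λ) (N := ⊥)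
    (fun t ht => puncturedFan_single_of_forall_notMem fun x hx => hmiss x (ht.2.1 x hx)) hfine

theorem puncturedFan_subdivide_pow_boundary (hO : ∀ x ∈ O, -x ∈ O) {C : Finset κ} {ρ δ : ℝ}
    (hlab : IsAntipodalColoring (Metric.thickening ρ O \ O) C lab δ) {n k N : ℕ} (hk : k ≤ n + 1)
    {d : ℝ} (hd : (n / (n + 1)) ^ N * d < min ρ δ) {c : SimplicialChain E}
    (hc : c ∈ chainsOn (simplicesIn k Set.univ d)) :
    puncturedFan O lab C.toList ((subdivide ^ N) (boundary c)) =
      puncturedFan O lab C.toList ((subdivide ^ N) c) +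
        puncturedFan O lab C.toList ((subdivide ^ N) (antipode c)) := by
  have hboundary := LinearMap.congr_fun ((boundary_subdivide (E := E)).pow_right N).eq c
  have hantipode := LinearMap.congr_fun ((antipode_subdivide (E := E)).pow_right N).eq c
  rw [Module.End.mul_apply, Module.End.mul_apply] at hboundary hantipode
  rw [← hboundary, ← hantipode]
  refine eq_of_mem_chainsOn (f := puncturedFan O lab C.toList ∘ₗ boundary)
    (g := puncturedFan O lab C.toList + puncturedFan O lab C.toList ∘ₗ antipode)
    (fun s hs => ?_) (subdivide_pow_mem_chainsOn hk convex_univ hc N)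
  exact puncturedFan_coboundary_single hO hlab fun x hx y hy => (hs.2.2 x hx y hy).trans_lt hd

end Facets

theorem exists_sum_abs_repr_lt {E ι : Type*} [NormedAddCommGroup E] [NormedSpace ℝ E]
    [Fintype ι] (b : Module.Basis ι ℝ E) {O : Set E} (hO : Bornology.IsBounded O) :
    ∃ R, ∀ x ∈ O, ∑ i, |b.repr x i| < R := by
  have := b.finiteDimensional_of_finite
  have := FiniteDimensional.proper_real E
  have hcont : Continuous fun x => ∑ i, |b.repr x i| :=
    continuous_finsetSum _ fun i _ => (b.coord i).continuous_of_finiteDimensional.abs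
  obtain ⟨R, hR⟩ := hO.isCompact_closure.bddAbove_image hcont.continuousOn
  exact ⟨R + 1, fun x hx =>
    (hR (Set.mem_image_of_mem _ (subset_closure hx))).trans_lt (lt_add_one R)⟩

theorem finrank_le_card_of_antipodallyColorable {E κ : Type*} [NormedAddCommGroup E]
    [NormedSpace ℝ E] [FiniteDimensional ℝ E] {O : Set E} (hbdd : Bornology.IsBounded O)
    (hzero : 0 ∈ O) (hneg : ∀ x ∈ O, -x ∈ O) {ρ : ℝ} (hρ : 0 < ρ) {C : Finset κ}
    (hC : AntipodallyColorable (Metric.thickening ρ O \ O) C) :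
    Module.finrank ℝ E ≤ C.card := by
  classical
  obtain ⟨lab, δ, hδ, hlab⟩ := hC
  set n := Module.finrank ℝ E
  let b := Module.finBasis ℝ E
  obtain ⟨R, hR⟩ := exists_sum_abs_repr_lt b hbdd
  let v (i : Fin n) : E := R • b i
  obtain ⟨r, hr0, hr⟩ := (Set.finite_range v).isBounded.exists_pos_norm_le
  rw [Set.forall_mem_range] at hr
  obtain ⟨N, hN⟩ := exists_pow_lt_of_lt_one (y := (n : ℝ) / (n + 1))
    (div_pos (lt_min hρ hδ) (mul_pos two_pos hr0))
    ((div_lt_one (by positivity)).2 (lt_add_one _))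
  rw [lt_div_iff₀ (by positivity)] at hN
  let Θ := puncturedFan O lab C.toList ∘ₗ subdivide ^ N
  have hball {l : List (Fin n)} (hl : l.Nodup) := cone_zero_crossSphere_mem_chainsOn hr0.le hr hl
  have hone : Θ (cone 0 (crossSphere v (List.finRange n))) = 1 := by
    refine map_cone_zero_crossSphere ?_ (fun i l hl => ?_) (fun i l hl => ?_)
      (List.nodup_finRange n)
    · simp only [Θ, LinearMap.comp_apply, subdivide_pow_single_singleton]
      simpa [fanCochain_zero] using puncturedFan_single_add (O := O) (A := {0}) (t := 0)
        (lab := lab) (Λ := C.toList) (by simpa) (by simp)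
    · exact puncturedFan_subdivide_pow_crossFacets b hR (cone_crossSphere_mem_chainsOn hl) N
    · have hlen : l.length + 2 ≤ n + 1 := by simpa using hl.length_le_card
      refine puncturedFan_subdivide_pow_boundary hneg hlab hlen hN
        (cone_mem_chainsOn ?_ (hball hl.of_cons))
      rintro s ⟨hs, hsr⟩
      exact mem_simplicesIn_of_norm_le (by simp [hs]) (by simp) (by simpa [hr i] using hsr)
  by_contra! hlt
  have hfine := subdivide_pow_mem_chainsOn le_rfl convex_univ
    (Finsupp.supported_mono (fun s hs => mem_simplicesIn_of_norm_le hs.1 (by simp) hs.2)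
      (hball (List.nodup_finRange n))) N
  refine one_ne_zero (hone.symm.trans (map_mem_of_mem_chainsOn (f := puncturedFan O lab C.toList)
    (N := ⊥) (fun s hs => ?_) hfine))
  exact puncturedFan_single_of_length_lt (by rw [hs.1, Finset.length_toList]; simpa)

end BorsukUlam

section Ekeland

variable {M : Type*} [MetricSpace M] {f : M → ℝ} {s : ℝ}

theorem add_mul_dist_le_of_le_of_descent (hs : 0 ≤ s) {u : ℕ → M}
    (hu : ∀ k, f (u (k + 1)) + s * dist (u k) (u (k + 1)) ≤ f (u k)) {k l : ℕ} (hkl : k ≤ l) :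
    f (u l) + s * dist (u k) (u l) ≤ f (u k) := by
  induction l, hkl using Nat.le_induction with
  | base => simp
  | succ l _ ih =>
    have htri := mul_le_mul_of_nonneg_left (dist_triangle (u k) (u l) (u (l + 1))) hs
    linarith [hu l]

theorem exists_add_mul_dist_le_of_descent [CompleteSpace M] (hf : LowerSemicontinuous f)
    (hbdd : BddBelow (Set.range f)) (hs : 0 < s) {u : ℕ → M}
    (hu : ∀ k, f (u (k + 1)) + s * dist (u k) (u (k + 1)) ≤ f (u k)) :
    ∃ x, ∀ k, f x + s * dist (u k) x ≤ f (u k) := by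
  have hdescent {k l : ℕ} (hkl : k ≤ l) := add_mul_dist_le_of_le_of_descent hs.le hu hkl
  have hanti : Antitone (f ∘ u) := fun k l hkl =>
    le_of_add_le_of_nonneg_left (hdescent hkl) (by positivity)
  have hconv := tendsto_atTop_ciInf hanti (hbdd.mono (Set.range_comp_subset_range u f))
  have hcauchy : CauchySeq u := by
    refine Metric.cauchySeq_iff'.2 fun ε hε => ?_
    obtain ⟨N, hN⟩ := (hconv.eventually_lt_const (lt_add_of_pos_right _ (mul_pos hs hε))).exists
    refine ⟨N, fun n hn => lt_of_mul_lt_mul_left ?_ hs.le⟩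
    rw [dist_comm]
    have hinf : (⨅ k, (f ∘ u) k) ≤ f (u n) := hanti.le_of_tendsto hconv n
    linarith [hdescent hn, show f (u N) < _ from hN]
  obtain ⟨x, hx⟩ := cauchySeq_tendsto_of_complete hcauchy
  refine ⟨x, fun k => ?_⟩
  have hlsc : LowerSemicontinuous fun y => f y + s * dist (u k) y :=
    hf.add (by fun_prop : Continuous fun y => s * dist (u k) y).lowerSemicontinuous
  refine le_of_forall_lt fun c hc => ?_
  obtain ⟨n, hcn, hkn⟩ := ((hx.eventually (hlsc x c hc)).and (eventually_ge_atTop k)).exists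
  exact hcn.trans_le (hdescent hkn)

theorem exists_forall_le_add_mul_dist [CompleteSpace M] [Nonempty M] (hf : LowerSemicontinuous f)
    (hbdd : BddBelow (Set.range f)) (hs : 0 < s) : ∃ x, ∀ y, f x ≤ f y + s * dist x y := by
  have hstep (x : M) (k : ℕ) : ∃ y, f y + s * dist x y ≤ f x ∧
      ∀ z, f z + s * dist x z ≤ f x → f y ≤ f z + (1 / 2) ^ k := by
    obtain ⟨_, ⟨y, hy, rfl⟩, hlt⟩ := Real.lt_sInf_add_pos
      (s := f '' {z | f z + s * dist x z ≤ f x}) ⟨f x, x, by simp, rfl⟩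
      (ε := (1 / 2) ^ k) (by positivity)
    refine ⟨y, hy, fun z hz => hlt.le.trans ?_⟩
    gcongr
    exact csInf_le (hbdd.mono (Set.image_subset_range _ _)) ⟨z, hz, rfl⟩
  choose next hdescent hnear using hstep
  obtain ⟨x₀⟩ := ‹Nonempty M›
  let u : ℕ → M := Nat.rec x₀ fun k x => next x k
  obtain ⟨x, hle⟩ := exists_add_mul_dist_le_of_descent hf hbdd hs (u := u) fun k => hdescent _ _
  refine ⟨x, fun y => ?_⟩
  by_contra! hlt
  have hy (k : ℕ) : f y + s * dist (u k) y ≤ f (u k) := by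
    have htri := mul_le_mul_of_nonneg_left (dist_triangle (u k) x y) hs.le
    linarith [hle k]
  have hxy : f x ≤ f y + 0 := by
    refine ge_of_tendsto' (tendsto_const_nhds.add
      (tendsto_pow_atTop_nhds_zero_of_lt_one (r := (1 / 2 : ℝ)) (by norm_num) (by norm_num)))
      fun k => ?_
    have hd : 0 ≤ s * dist (u (k + 1)) x := by positivity
    linarith [hle (k + 1), show f (u (k + 1)) ≤ f y + (1 / 2) ^ k from hnear (u k) k y (hy k)]
  have hd : 0 ≤ s * dist x y := by positivity
  linarith

end Ekeland

section Derivative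

variable {E F : Type*} [NormedAddCommGroup E] [NormedSpace ℝ E]
  [NormedAddCommGroup F] [NormedSpace ℝ F]

theorem odd_fderiv_of_even {f : E → F} (hf : f.Even) : (fderiv ℝ f).Odd := fun y => by
  have hcomp : f ∘ ContinuousLinearEquiv.neg ℝ = f := funext hf
  have hchain := (ContinuousLinearEquiv.neg ℝ : E ≃L[ℝ] E).comp_right_fderiv (f := f) (x := y)
  rw [hcomp] at hchain
  ext v
  simp [hchain]

theorem exists_forall_abs_sub_sub_fderiv_le {φ : E → ℝ} (hφ : ContDiff ℝ 1 φ) {K : Set E}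
    (hK : IsCompact K) {η : ℝ} (hη : 0 < η) :
    ∃ t > 0, ∀ y ∈ K, ∀ z, ‖z - y‖ < t → |φ z - φ y - fderiv ℝ φ y (z - y)| ≤ η * ‖z - y‖ := by
  have hfderiv : Continuous (fderiv ℝ φ) := hφ.continuous_fderiv one_ne_zero
  obtain ⟨t, ht, hclose⟩ := Metric.mem_uniformity_dist.1
    (hK.uniformContinuousAt_of_continuousAt _ (fun y _ => hfderiv.continuousAt)
      (Metric.dist_mem_uniformity hη))
  refine ⟨t, ht, fun y hy z hz => ?_⟩
  refine (convex_ball y t).norm_image_sub_le_of_norm_hasFDerivWithin_le' (f' := fderiv ℝ φ)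
    (fun x _ => (hφ.differentiable one_ne_zero x).hasFDerivAt.hasFDerivWithinAt) (fun x hx => ?_)
    (Metric.mem_ball_self ht) (mem_ball_iff_norm.2 hz)
  rw [← dist_eq_norm, dist_comm]
  exact (hclose (Metric.mem_ball'.1 hx) hy).le

end Derivative

section NormalizedGradient

variable {H : Type*} [NormedAddCommGroup H] [InnerProductSpace ℝ H] [CompleteSpace H]
  {φ : H → ℝ} {ν : ℝ}

/-- The gradient of `φ`, shortened to unit length where its norm is at least `ν`; the cut-off by
`ν` keeps the field continuous. -/
def normalizedGradient (φ : H → ℝ) (ν : ℝ) (y : H) : H :=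
  (max ‖fderiv ℝ φ y‖ ν)⁻¹ • gradient φ y

theorem continuous_normalizedGradient (hφ : ContDiff ℝ 1 φ) (hν : 0 < ν) :
    Continuous (normalizedGradient φ ν) := by
  have hfderiv : Continuous (fderiv ℝ φ) := hφ.continuous_fderiv one_ne_zero
  exact ((hfderiv.norm.max continuous_const).inv₀ fun y => (lt_max_of_lt_right hν).ne').smul
    ((InnerProductSpace.toDual ℝ H).symm.continuous.comp hfderiv)

theorem norm_normalizedGradient_le (hν : 0 < ν) (y : H) : ‖normalizedGradient φ ν y‖ ≤ 1 := by
  have hpos : 0 < max ‖fderiv ℝ φ y‖ ν := lt_max_of_lt_right hν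
  rw [normalizedGradient, gradient, norm_smul, LinearIsometryEquiv.norm_map, norm_inv,
    Real.norm_of_nonneg hpos.le, inv_mul_le_iff₀ hpos, mul_one]
  exact le_max_left _ _

theorem fderiv_normalizedGradient (hν : 0 < ν) {y : H} (hy : ν ≤ ‖fderiv ℝ φ y‖) :
    fderiv ℝ φ y (normalizedGradient φ ν y) = ‖fderiv ℝ φ y‖ := by
  have hne : ‖fderiv ℝ φ y‖ ≠ 0 := (hν.trans_le hy).ne'
  have hgrad : fderiv ℝ φ y (gradient φ y) = ‖fderiv ℝ φ y‖ ^ 2 := by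
    rw [gradient, ← InnerProductSpace.toDual_symm_apply, real_inner_self_eq_norm_sq,
      LinearIsometryEquiv.norm_map]
  rw [normalizedGradient, max_eq_left hy, map_smul, hgrad, smul_eq_mul]
  field_simp

theorem odd_normalizedGradient (heven : φ.Even) : (normalizedGradient φ ν).Odd := fun y => by
  rw [normalizedGradient, normalizedGradient, gradient, gradient, odd_fderiv_of_even heven,
    norm_neg, map_neg, smul_neg]

theorem exists_sub_smul_normalizedGradient_le (hφ : ContDiff ℝ 1 φ) {K : Set H}
    (hK : IsCompact K) (hν : 0 < ν) :
    ∃ t > 0, ∀ y ∈ K, ν ≤ ‖fderiv ℝ φ y‖ → ∀ s ∈ Set.Icc 0 t,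
      φ (y - s • normalizedGradient φ ν y) ≤ φ y - s * ‖fderiv ℝ φ y‖ / 2 := by
  obtain ⟨t, ht, htaylor⟩ := exists_forall_abs_sub_sub_fderiv_le hφ hK (half_pos hν)
  refine ⟨t / 2, half_pos ht, fun y hy hsteep s hs => ?_⟩
  have hdist : ‖y - s • normalizedGradient φ ν y - y‖ ≤ s := by
    rw [sub_sub_cancel_left, norm_neg, norm_smul, Real.norm_of_nonneg hs.1]
    exact mul_le_of_le_one_right hs.1 (norm_normalizedGradient_le hν y)
  have happrox := (abs_le.1 (htaylor y hy _ (hdist.trans_lt (hs.2.trans_lt (half_lt_self ht))))).2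
  rw [sub_sub_cancel_left, map_neg, map_smul, fderiv_normalizedGradient hν hsteep, norm_neg,
    smul_eq_mul] at happrox
  rw [sub_sub_cancel_left, norm_neg] at hdist
  have herr : ν / 2 * ‖s • normalizedGradient φ ν y‖ ≤ ‖fderiv ℝ φ y‖ / 2 * s := by gcongr
  linarith

end NormalizedGradient

theorem lowerSemicontinuous_iSup_comp_eval {X Y : Type*} [TopologicalSpace X] [CompactSpace X]
    [TopologicalSpace Y] {φ : Y → ℝ} (hφ : Continuous φ) (S : Set C(X, Y)) :
    LowerSemicontinuous fun g : S => ⨆ x, φ (g.1 x) := by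
  refine lowerSemicontinuous_ciSup (fun g => ?_) fun x => ?_
  · exact (isCompact_range (hφ.comp g.1.continuous)).bddAbove
  · exact (hφ.comp ((continuous_eval_const x).comp continuous_subtype_val)).lowerSemicontinuous

section DescentClass

variable {E X : Type*} [NormedAddCommGroup E] [TopologicalSpace X] {φ : E → ℝ} {σ : X → X}
  {h g : C(X, E)} {c ε κ ν : ℝ} {e : X → E → ℝ} {x : X}

/-- The equivariant deformations of `h` that fix `h` below the level `c - ε` and elsewhere
decrease `φ` by at least the penalty `e`. -/
def descentClass (φ : E → ℝ) (σ : X → X) (h : C(X, E)) (c ε : ℝ) (e : X → E → ℝ) :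
    Set C(X, E) :=
  {g | (∀ x, g (σ x) = -g x) ∧ (∀ x, φ (h x) ≤ c - ε → g x = h x) ∧
    ∀ x, c - ε < φ (h x) → φ (g x) + e x (g x) ≤ φ (h x)}

theorem isClosed_descentClass (hφ : Continuous φ)
    (he : ∀ x, c - ε < φ (h x) → Continuous (e x)) :
    IsClosed (descentClass φ σ h c ε e) := by
  have heval (x : X) : Continuous fun g : C(X, E) => g x := continuous_eval_const x
  simp only [descentClass, Set.ofPred_and, Set.ofPred_forall]
  refine (isClosed_iInter fun x => ?_).inter ((isClosed_iInter fun x => isClosed_iInter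
    fun _ => ?_).inter (isClosed_iInter fun x => isClosed_iInter fun hx => ?_))
  · exact isClosed_eq (heval _) (heval _).neg
  · exact isClosed_eq (heval x) continuous_const
  · exact isClosed_le ((hφ.comp (heval x)).add ((he x hx).comp (heval x))) continuous_const

theorem lt_of_mem_descentClass (hg : g ∈ descentClass φ σ h c ε e) (hx : c - ε < φ (g x)) :
    c - ε < φ (h x) := by
  by_contra! hlow
  rw [hg.2.1 x hlow] at hx
  exact hx.not_ge hlow

variable [NormedSpace ℝ E]

/-- A penalty `e` keeping a descent of `φ` that starts at `y₀` away from the points of the band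
`c - ε ≤ φ ≤ c + ε` at which `φ` is flat: along short steps `e` grows at most half as fast as `φ`
can decrease, so `φ + e` can be made to decrease, and then `e` never exceeds the width `2 ε`. -/
structure IsBarrier (φ : E → ℝ) (c ε κ ν : ℝ) (y₀ : E) (e : E → ℝ) : Prop where
  continuous : Continuous e
  nonneg : ∀ y, 0 ≤ e y
  self_eq_zero : e y₀ = 0
  sub_le : ∀ y, |φ y - c| ≤ ε → ∀ z, ‖z - y‖ ≤ κ → e z - e y ≤ ‖fderiv ℝ φ y‖ / 2 * ‖z - y‖
  le_norm_fderiv : ∀ y, |φ y - c| ≤ ε → e y ≤ 2 * ε → ν ≤ ‖fderiv ℝ φ y‖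

theorem mem_descentClass_self (hodd : ∀ x, h (σ x) = -h x)
    (he : ∀ x, c - ε < φ (h x) → IsBarrier φ c ε κ ν (h x) (e x)) :
    h ∈ descentClass φ σ h c ε e :=
  ⟨hodd, fun _ _ => rfl, fun x hx => by rw [(he x hx).self_eq_zero, add_zero]⟩

theorem le_add_of_mem_descentClass (hle : ∀ x, φ (h x) ≤ c + ε)
    (he : ∀ x, c - ε < φ (h x) → IsBarrier φ c ε κ ν (h x) (e x))
    (hg : g ∈ descentClass φ σ h c ε e) (x : X) : φ (g x) ≤ c + ε := by
  rcases le_or_gt (φ (h x)) (c - ε) with hx | hx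
  · rw [hg.2.1 x hx]
    exact hle x
  · linarith [hg.2.2 x hx, (he x hx).nonneg (g x), hle x]

theorem abs_sub_le_of_mem_descentClass (hle : ∀ x, φ (h x) ≤ c + ε)
    (he : ∀ x, c - ε < φ (h x) → IsBarrier φ c ε κ ν (h x) (e x))
    (hg : g ∈ descentClass φ σ h c ε e) (hx : c - ε < φ (g x)) : |φ (g x) - c| ≤ ε :=
  abs_le.2 ⟨by linarith, by linarith [le_add_of_mem_descentClass hle he hg x]⟩

theorem le_norm_fderiv_of_mem_descentClass (hle : ∀ x, φ (h x) ≤ c + ε)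
    (he : ∀ x, c - ε < φ (h x) → IsBarrier φ c ε κ ν (h x) (e x))
    (hg : g ∈ descentClass φ σ h c ε e) (hx : c - ε < φ (g x)) : ν ≤ ‖fderiv ℝ φ (g x)‖ := by
  have hxh := lt_of_mem_descentClass hg hx
  refine (he x hxh).le_norm_fderiv _ (abs_sub_le_of_mem_descentClass hle he hg hx) ?_
  linarith [hg.2.2 x hxh, hle x]

end DescentClass

section Deformation

variable {H X : Type*} [NormedAddCommGroup H] [InnerProductSpace ℝ H] [CompleteSpace H]
  [TopologicalSpace X] {φ : H → ℝ} {σ : X → X} {h g : C(X, H)} {b c ε κ ν t : ℝ}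
  {e : X → H → ℝ}

/-- Moves `g x` against the gradient of `φ`, by the amount `t` or, where `φ (g x)` is less than
`t` above the level `b`, by the smaller amount that keeps the motion continuous. -/
def descentStep (hφ : ContDiff ℝ 1 φ) (hν : 0 < ν) (g : C(X, H)) (b t : ℝ) : C(X, H) where
  toFun x := g x - min t (max (φ (g x) - b) 0) • normalizedGradient φ ν (g x)
  continuous_toFun := by
    have hφg : Continuous fun x => φ (g x) := hφ.continuous.comp g.continuous
    have hgrad := (continuous_normalizedGradient hφ hν).comp g.continuous
    exact g.continuous.sub
      ((continuous_const.min ((hφg.sub continuous_const).max continuous_const)).smul hgrad)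

theorem descentStep_eq_self (hφ : ContDiff ℝ 1 φ) (hν : 0 < ν) (ht : 0 ≤ t) {x : X}
    (hx : φ (g x) ≤ b) : descentStep hφ hν g b t x = g x := by
  simp [descentStep, max_eq_right (sub_nonpos.2 hx), ht]

theorem norm_descentStep_sub_le (hφ : ContDiff ℝ 1 φ) (hν : 0 < ν) (ht : 0 ≤ t) (x : X) :
    ‖descentStep hφ hν g b t x - g x‖ ≤ min t (max (φ (g x) - b) 0) := by
  have hsize : 0 ≤ min t (max (φ (g x) - b) 0) := le_min ht (le_max_right _ _)
  rw [descentStep, ContinuousMap.coe_mk, sub_sub_cancel_left, norm_neg, norm_smul,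
    Real.norm_of_nonneg hsize]
  exact mul_le_of_le_one_right hsize (norm_normalizedGradient_le hν _)

theorem descentStep_mem_descentClass (hφ : ContDiff ℝ 1 φ) (heven : φ.Even) (hν : 0 < ν)
    (hle : ∀ x, φ (h x) ≤ c + ε)
    (he : ∀ x, c - ε < φ (h x) → IsBarrier φ c ε κ ν (h x) (e x))
    (hg : g ∈ descentClass φ σ h c ε e) (ht : 0 ≤ t) (htκ : t ≤ κ)
    (hdec : ∀ x, c - ε < φ (g x) → φ (descentStep hφ hν g (c - ε) t x) ≤
      φ (g x) - min t (max (φ (g x) - (c - ε)) 0) * ‖fderiv ℝ φ (g x)‖ / 2) :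
    descentStep hφ hν g (c - ε) t ∈ descentClass φ σ h c ε e := by
  refine ⟨fun x => ?_, fun x hx => ?_, fun x hx => ?_⟩
  · simp only [descentStep, ContinuousMap.coe_mk, hg.1 x, heven (g x),
      odd_normalizedGradient heven (g x)]
    module
  · rw [descentStep_eq_self hφ hν ht, hg.2.1 x hx]
    rwa [hg.2.1 x hx]
  · rcases le_or_gt (φ (g x)) (c - ε) with hgx | hgx
    · rw [descentStep_eq_self hφ hν ht hgx]
      exact hg.2.2 x hx
    · have hmove := norm_descentStep_sub_le (g := g) (b := c - ε) hφ hν ht x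
      have hpenalty := (he x hx).sub_le _ (abs_sub_le_of_mem_descentClass hle he hg hgx) _
        (hmove.trans ((min_le_left _ _).trans htκ))
      have hgrow := mul_le_mul_of_nonneg_left hmove (show 0 ≤ ‖fderiv ℝ φ (g x)‖ / 2 by positivity)
      linarith [hdec x hgx, hg.2.2 x hx]

theorem exists_mem_descentClass_dist_le [CompactSpace X] (hφ : ContDiff ℝ 1 φ) (heven : φ.Even)
    (hε : 0 < ε) (hκ : 0 < κ) (hν : 0 < ν) (hle : ∀ x, φ (h x) ≤ c + ε)
    (he : ∀ x, c - ε < φ (h x) → IsBarrier φ c ε κ ν (h x) (e x))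
    (hg : g ∈ descentClass φ σ h c ε e) :
    ∃ t₀ > 0, ∀ t ∈ Set.Ioc 0 t₀, ∃ g' ∈ descentClass φ σ h c ε e, dist g g' ≤ t ∧
      ∀ x, φ (g' x) ≤ max (φ (g x) - t * ν / 2) (c - ε / 2) := by
  obtain ⟨t₁, ht₁, hstep⟩ :=
    exists_sub_smul_normalizedGradient_le hφ (isCompact_range g.continuous) hν
  refine ⟨min t₁ (min κ (ε / 2)), by positivity, fun t ht => ?_⟩
  obtain ⟨htt₁, htκ, htε⟩ : t ≤ t₁ ∧ t ≤ κ ∧ t ≤ ε / 2 := by simpa using ht.2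
  have hdec (x : X) (hx : c - ε < φ (g x)) := hstep (g x) ⟨x, rfl⟩
    (le_norm_fderiv_of_mem_descentClass hle he hg hx) (min t (max (φ (g x) - (c - ε)) 0))
    ⟨le_min ht.1.le (le_max_right _ _), (min_le_left _ _).trans htt₁⟩
  refine ⟨descentStep hφ hν g (c - ε) t,
    descentStep_mem_descentClass hφ heven hν hle he hg ht.1.le htκ hdec,
    (ContinuousMap.dist_le ht.1.le).2 fun x => ?_, fun x => ?_⟩
  · rw [dist_comm, dist_eq_norm]
    exact (norm_descentStep_sub_le hφ hν ht.1.le x).trans (min_le_left _ _)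
  · rcases le_or_gt (φ (g x)) (c - ε) with hx | hx
    · rw [descentStep_eq_self hφ hν ht.1.le hx]
      exact le_max_of_le_right (by linarith)
    have hdecx : φ (descentStep hφ hν g (c - ε) t x) ≤ _ := hdec x hx
    rcases le_or_gt (φ (g x)) (c - ε / 2) with hx' | hx'
    · have : 0 ≤ min t (max (φ (g x) - (c - ε)) 0) := le_min ht.1.le (le_max_right _ _)
      exact le_max_of_le_right (hdecx.trans (by nlinarith [norm_nonneg (fderiv ℝ φ (g x))]))
    · rw [min_eq_left (le_max_of_le_left (by linarith))] at hdecx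
      have hsteep := mul_le_mul_of_nonneg_left
        (le_norm_fderiv_of_mem_descentClass hle he hg hx) ht.1.le
      exact le_max_of_le_left (by linarith)

/-- Deformation below a level: where `φ` exceeds `c - ε`, barriers keep the descent off the flat
part of the band, so Ekeland's principle for `sup φ ∘ g` yields a deformation with no slope left. -/
theorem exists_mem_descentClass_le [CompactSpace X] (hφ : ContDiff ℝ 1 φ) (heven : φ.Even)
    (hε : 0 < ε) (hκ : 0 < κ) (hν : 0 < ν) (hodd : ∀ x, h (σ x) = -h x)
    (hle : ∀ x, φ (h x) ≤ c + ε)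
    (he : ∀ x, c - ε < φ (h x) → IsBarrier φ c ε κ ν (h x) (e x)) :
    ∃ g ∈ descentClass φ σ h c ε e, ∀ x, φ (g x) ≤ c - ε / 4 := by
  have hself := mem_descentClass_self hodd he
  rcases isEmpty_or_nonempty X with hX | hX
  · exact ⟨h, hself, hX.elim⟩
  have : CompleteSpace (descentClass φ σ h c ε e) :=
    (isClosed_descentClass hφ.continuous fun x hx => (he x hx).continuous).completeSpace_coe
  have : Nonempty (descentClass φ σ h c ε e) := ⟨⟨h, hself⟩⟩
  have hle_sup (g : C(X, H)) (x : X) : φ (g x) ≤ ⨆ x, φ (g x) :=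
    le_ciSup (isCompact_range (hφ.continuous.comp g.continuous)).bddAbove x
  by_contra! hhigh
  have hsup_gt (g : descentClass φ σ h c ε e) : c - ε / 4 < ⨆ x, φ (g.1 x) := by
    obtain ⟨x, hx⟩ := hhigh g.1 g.2
    exact hx.trans_le (hle_sup g.1 x)
  obtain ⟨g, hg⟩ := exists_forall_le_add_mul_dist
    (lowerSemicontinuous_iSup_comp_eval hφ.continuous _)
    ⟨c - ε / 4, by rintro _ ⟨g, rfl⟩; exact (hsup_gt g).le⟩ (show 0 < ν / 4 by positivity)
  obtain ⟨t₀, ht₀, hstep⟩ := exists_mem_descentClass_dist_le hφ heven hε hκ hν hle he g.2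
  obtain ⟨t, ht, htε⟩ : ∃ t ∈ Set.Ioc 0 t₀, t * ν ≤ ε :=
    ⟨min t₀ (ε / ν), ⟨by positivity, min_le_left _ _⟩,
      (le_div_iff₀ hν).1 (min_le_right t₀ (ε / ν))⟩
  obtain ⟨g', hg', hdist, hdec⟩ := hstep t ht
  have hsup : ⨆ x, φ (g' x) ≤ max ((⨆ x, φ (g.1 x)) - t * ν / 2) (c - ε / 2) :=
    ciSup_le fun x => (hdec x).trans (max_le_max_right _ (by linarith [hle_sup g.1 x]))
  have hekeland : (⨆ x, φ (g.1 x)) ≤ (⨆ x, φ (g' x)) + ν / 4 * dist g.1 g' := hg ⟨g', hg'⟩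
  have hshort := mul_le_mul_of_nonneg_left hdist (show 0 ≤ ν / 4 by positivity)
  have htν := mul_pos ht.1 hν
  rcases le_max_iff.1 hsup with hsup | hsup <;> linarith [hsup_gt g]

end Deformation

section AlmostCritical

variable {E : Type*} [NormedAddCommGroup E] [NormedSpace ℝ E] {φ : E → ℝ}
  {β M m c ε κ ν ρ s w : ℝ} {q y₀ : E}

/-- Approximate critical points in the sense of Cerami, with value in `[0, β]` up to `ν`. -/
def IsAlmostCritical (φ : E → ℝ) (β ν : ℝ) (u : E) : Prop :=
  (1 + ‖u‖) * ‖fderiv ℝ φ u‖ < ν ∧ -ν ≤ φ u ∧ φ u ≤ β + ν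

theorem IsAlmostCritical.mono {ν' : ℝ} {u : E} (hu : IsAlmostCritical φ β ν u) (hν : ν ≤ ν') :
    IsAlmostCritical φ β ν' u :=
  ⟨hu.1.trans_le hν, (neg_le_neg hν).trans hu.2.1, hu.2.2.trans (by gcongr)⟩

theorem isAlmostCritical_of_fderiv_eq_zero {u : E} (hu : fderiv ℝ φ u = 0) (h0 : 0 ≤ φ u)
    (hβ : φ u ≤ β) (hν : 0 < ν) : IsAlmostCritical φ β ν u :=
  ⟨by simpa [hu], by linarith, by linarith⟩

theorem isAlmostCritical_of_abs_sub_le {u : E} (h0 : 0 ≤ c - ε) (hβ : c + ε ≤ β) (hν : 0 < ν)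
    (hu : |φ u - c| ≤ ε) (hlt : (1 + ‖u‖) * ‖fderiv ℝ φ u‖ < ν) : IsAlmostCritical φ β ν u := by
  obtain ⟨hlow, hhigh⟩ := abs_le.1 hu
  exact ⟨hlt, by linarith, by linarith⟩

theorem div_le_norm_fderiv_of_not_isAlmostCritical {u : E} {R : ℝ} (h0 : 0 ≤ c - ε)
    (hβ : c + ε ≤ β) (hν : 0 < ν) (hu : |φ u - c| ≤ ε) (hnot : ¬IsAlmostCritical φ β ν u)
    (hR : 1 + ‖u‖ ≤ R) : ν / R ≤ ‖fderiv ℝ φ u‖ := by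
  have hle : ν ≤ (1 + ‖u‖) * ‖fderiv ℝ φ u‖ :=
    le_of_not_gt fun hlt => hnot (isAlmostCritical_of_abs_sub_le h0 hβ hν hu hlt)
  have hpos : 0 < R := lt_of_lt_of_le (by positivity) hR
  rw [div_le_iff₀' hpos]
  exact hle.trans (by gcongr)

/-- Condition (M) without sequences: almost critical points in `[0, β]` lie in the ball of radius
`M`, and two of them at distance less than `m` are arbitrarily close to each other. -/
structure DiscreteCerami (φ : E → ℝ) (β M m : ℝ) : Prop where
  radius_nonneg : 0 ≤ M
  gap_pos : 0 < m
  bounded : ∃ ν > 0, ∀ u, IsAlmostCritical φ β ν u → ‖u‖ ≤ M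
  separated : ∀ κ > 0, ∃ ν > 0, ∀ u v, IsAlmostCritical φ β ν u → IsAlmostCritical φ β ν v →
    ‖u - v‖ < m → ‖u - v‖ < κ

theorem DiscreteCerami.eq_of_norm_sub_lt (hφm : DiscreteCerami φ β M m) {p p' : E}
    (hp : fderiv ℝ φ p = 0) (hp' : fderiv ℝ φ p' = 0) (hpβ : φ p ∈ Set.Icc 0 β)
    (hpβ' : φ p' ∈ Set.Icc 0 β) (hlt : ‖p - p'‖ < m) : p = p' := by
  by_contra hne
  obtain ⟨ν, hν, hsep⟩ := hφm.separated ‖p - p'‖ (norm_pos_iff.2 (sub_ne_zero.2 hne))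
  exact lt_irrefl _ (hsep p p' (isAlmostCritical_of_fderiv_eq_zero hp hpβ.1 hpβ.2 hν)
    (isAlmostCritical_of_fderiv_eq_zero hp' hpβ'.1 hpβ'.2 hν) hlt)

theorem DiscreteCerami.exists_tendsto [CompleteSpace E] (hφm : DiscreteCerami φ β M m)
    (hφ : ContDiff ℝ 1 φ) (h0 : 0 ≤ c - ε) (hβ : c + ε ≤ β) {y : ℕ → E} {a : E}
    (hband : ∀ k, |φ (y k) - c| ≤ ε) (hnear : ∀ᶠ k in atTop, ‖y k - a‖ < m / 2)
    (hder : Tendsto (fun k => ‖fderiv ℝ φ (y k)‖) atTop (𝓝 0)) :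
    ∃ z, Tendsto y atTop (𝓝 z) ∧ fderiv ℝ φ z = 0 ∧ |φ z - c| ≤ ε := by
  have hcerami : Tendsto (fun k => (1 + ‖y k‖) * ‖fderiv ℝ φ (y k)‖) atTop (𝓝 0) := by
    have hbound : Tendsto (fun k => (1 + (‖a‖ + m / 2)) * ‖fderiv ℝ φ (y k)‖) atTop (𝓝 0) := by
      simpa using hder.const_mul (1 + (‖a‖ + m / 2))
    refine squeeze_zero' (.of_forall fun k => by positivity) ?_ hbound
    filter_upwards [hnear] with k hk
    gcongr
    linarith [norm_le_norm_add_norm_sub' (y k) a]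
  have hcauchy : CauchySeq y := by
    refine Metric.cauchySeq_iff.2 fun κ hκ => ?_
    obtain ⟨ν, hν, hsep⟩ := hφm.separated κ hκ
    obtain ⟨N, hN⟩ := eventually_atTop.1 ((hcerami.eventually_lt_const hν).and hnear)
    have hcrit (i : ℕ) (hi : N ≤ i) : IsAlmostCritical φ β ν (y i) :=
      isAlmostCritical_of_abs_sub_le h0 hβ hν (hband i) (hN i hi).1
    refine ⟨N, fun i hi j hj => ?_⟩
    rw [dist_eq_norm]
    refine hsep _ _ (hcrit i hi) (hcrit j hj) ?_
    have htri := norm_sub_le_norm_sub_add_norm_sub (y i) a (y j)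
    rw [norm_sub_rev a] at htri
    linarith [(hN i hi).2, (hN j hj).2]
  obtain ⟨z, hz⟩ := cauchySeq_tendsto_of_complete hcauchy
  have hder_z := ((hφ.continuous_fderiv one_ne_zero).norm.tendsto z).comp hz
  exact ⟨z, hz, norm_eq_zero.1 (tendsto_nhds_unique hder_z hder),
    le_of_tendsto' (((hφ.continuous.tendsto z).comp hz).sub_const c).abs hband⟩

theorem DiscreteCerami.exists_le_norm_fderiv_of_isCompact [CompleteSpace E]
    (hφm : DiscreteCerami φ β M m) (hφ : ContDiff ℝ 1 φ) (h0 : 0 ≤ c - ε) (hβ : c + ε ≤ β)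
    (hiso : ∀ p, fderiv ℝ φ p = 0 → |φ p - c| ≤ ε → φ p = c) {A : Set E} (hA : IsCompact A) :
    ∃ ν > 0, ∀ y₀ ∈ A, (∀ p, fderiv ℝ φ p = 0 → φ p = c → m / 4 ≤ ‖y₀ - p‖) →
      ∀ y, |φ y - c| ≤ ε → ‖y - y₀‖ < m / 8 → ν ≤ ‖fderiv ℝ φ y‖ := by
  by_contra! hflat
  have hm := hφm.gap_pos
  choose a haA hafar y hband hya hder using fun k : ℕ =>
    hflat (1 / ((k : ℝ) + 1)) Nat.one_div_pos_of_nat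
  obtain ⟨a', -, ψ, hψ, ha'⟩ := hA.tendsto_subseq haA
  have hder' : Tendsto (fun k => ‖fderiv ℝ φ (y (ψ k))‖) atTop (𝓝 0) :=
    (squeeze_zero (fun k => norm_nonneg _) (fun k => (hder k).le)
      tendsto_one_div_add_atTop_nhds_zero_nat).comp hψ.tendsto_atTop
  have hnear : ∀ᶠ k in atTop, ‖y (ψ k) - a'‖ < m / 2 := by
    filter_upwards [Metric.tendsto_nhds.1 ha' (m / 8) (by positivity)] with k hk
    rw [dist_eq_norm] at hk
    have htri := norm_sub_le_norm_sub_add_norm_sub (y (ψ k)) (a (ψ k)) a'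
    linarith [hya (ψ k), show ‖a (ψ k) - a'‖ < m / 8 from hk]
  obtain ⟨z, hz, hz0, hzband⟩ := hφm.exists_tendsto hφ h0 hβ (fun k => hband (ψ k)) hnear hder'
  have hfar : m / 4 ≤ ‖a' - z‖ := ge_of_tendsto' (ha'.sub_const z).norm fun k =>
    hafar (ψ k) z hz0 (hiso z hz0 hzband)
  have hclose : ‖z - a'‖ ≤ m / 8 := le_of_tendsto' (hz.sub ha').norm fun k => (hya (ψ k)).le
  rw [norm_sub_rev] at hclose
  linarith

end AlmostCritical

section Collar

variable {E : Type*} [NormedAddCommGroup E] {κ ρ s w : ℝ} {q y z : E}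

/-- The radial function with slope `s` on the collar `ρ ≤ ‖y - q‖ ≤ ρ + w` and slope `0`
elsewhere. -/
def collarFun (s ρ w : ℝ) (q y : E) : ℝ := s * min (max (‖y - q‖ - ρ) 0) w

theorem continuous_collarFun (s ρ w : ℝ) (q : E) : Continuous (collarFun s ρ w q) := by
  unfold collarFun
  fun_prop

theorem collarFun_nonneg (hs : 0 ≤ s) (hw : 0 ≤ w) (y : E) : 0 ≤ collarFun s ρ w q y :=
  mul_nonneg hs (le_min (le_max_right _ _) hw)

theorem collarFun_eq_zero (hw : 0 ≤ w) (hy : ‖y - q‖ ≤ ρ) : collarFun s ρ w q y = 0 := by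
  rw [collarFun, max_eq_right (sub_nonpos.2 hy), min_eq_left hw, mul_zero]

theorem lt_of_collarFun_lt (hy : collarFun s ρ w q y < s * w) : ‖y - q‖ < ρ + w := by
  contrapose! hy
  rw [collarFun, min_eq_right (le_max_of_le_left (by linarith))]

theorem collarFun_le (hs : 0 ≤ s) (y : E) : collarFun s ρ w q y ≤ s * w :=
  mul_le_mul_of_nonneg_left (min_le_right _ _) hs

theorem collarFun_sub_le (hs : 0 ≤ s) (y z : E) :
    collarFun s ρ w q z - collarFun s ρ w q y ≤ s * ‖z - y‖ := by
  have htri := norm_sub_le_norm_sub_add_norm_sub z y q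
  rw [collarFun, collarFun, ← mul_sub]
  refine mul_le_mul_of_nonneg_left (sub_le_iff_le_add.2 ?_) hs
  rw [← min_add_add_left, ← max_add_add_left]
  exact min_le_min (max_le_max (by linarith) (by positivity)) (by linarith [norm_nonneg (z - y)])

theorem isBarrier_collarFun [NormedSpace ℝ E] {φ : E → ℝ} {c ε ν : ℝ} {y₀ : E} (hs : 0 ≤ s)
    (hw : 0 ≤ w) (hεw : 2 * ε < s * w) (hy₀ : ‖y₀ - q‖ ≤ ρ)
    (hcollar : ∀ y, |φ y - c| ≤ ε → ρ - κ < ‖y - q‖ → ‖y - q‖ < ρ + w →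
      2 * s ≤ ‖fderiv ℝ φ y‖)
    (hsteep : ∀ y, |φ y - c| ≤ ε → ‖y - q‖ < ρ + w → ν ≤ ‖fderiv ℝ φ y‖) :
    IsBarrier φ c ε κ ν y₀ (collarFun s ρ w q) where
  continuous := continuous_collarFun s ρ w q
  nonneg := collarFun_nonneg hs hw
  self_eq_zero := collarFun_eq_zero hw hy₀
  sub_le y hy z hzy := by
    have hpos : 0 ≤ ‖fderiv ℝ φ y‖ / 2 * ‖z - y‖ := by positivity
    rcases le_or_gt (ρ + w) ‖y - q‖ with houter | houter
    · have hmax : s * w ≤ collarFun s ρ w q y :=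
        not_lt.1 fun hlt => houter.not_gt (lt_of_collarFun_lt hlt)
      linarith [collarFun_le (ρ := ρ) (w := w) (q := q) hs z]
    rcases le_or_gt ‖y - q‖ (ρ - κ) with hinner | hinner
    · have htri := norm_sub_le_norm_sub_add_norm_sub z y q
      rw [collarFun_eq_zero hw (y := z) (by linarith)]
      linarith [collarFun_nonneg (ρ := ρ) (q := q) hs hw y]
    · refine (collarFun_sub_le hs y z).trans ?_
      gcongr
      linarith [hcollar y hy hinner houter]
  le_norm_fderiv y hy hle := hsteep y hy (lt_of_collarFun_lt (hle.trans_lt hεw))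

end Collar

section Barrier

variable {E : Type*} [NormedAddCommGroup E] [NormedSpace ℝ E] {φ : E → ℝ}
  {β M m c ε κ ν ν' R : ℝ} {y₀ : E}

theorem IsBarrier.mono {e : E → ℝ} (he : IsBarrier φ c ε κ ν y₀ e) (hν : ν' ≤ ν) :
    IsBarrier φ c ε κ ν' y₀ e :=
  { he with le_norm_fderiv := fun y hy hle => hν.trans (he.le_norm_fderiv y hy hle) }

/-- If an almost critical point is within `κ` of `y₀`, the barrier is a collar around it, which by
separation contains no further almost critical points. -/
theorem exists_isBarrier_of_norm_le (h0 : 0 ≤ c - ε) (hβ : c + ε ≤ β) (hκ : 0 < κ) (hν : 0 < ν)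
    (hsep : ∀ u v, IsAlmostCritical φ β ν u → IsAlmostCritical φ β ν v → ‖u - v‖ < 4 * κ →
      ‖u - v‖ < κ)
    (hy₀ : 1 + ‖y₀‖ + 4 * κ ≤ R) (hε : 2 * ε < ν / R / 2 * κ)
    (hnear : ∀ y, |φ y - c| ≤ ε → ‖y - y₀‖ < 4 * κ → ν' ≤ ‖fderiv ℝ φ y‖) :
    ∃ e, IsBarrier φ c ε κ ν' y₀ e := by
  have hR : 0 < R := lt_of_lt_of_le (by positivity) hy₀
  have hslope {y : E} (hy : |φ y - c| ≤ ε) (hyy₀ : ‖y - y₀‖ < 4 * κ)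
      (hnot : ¬IsAlmostCritical φ β ν y) : 2 * (ν / R / 2) ≤ ‖fderiv ℝ φ y‖ := by
    rw [mul_div_cancel₀ _ two_ne_zero]
    refine div_le_norm_fderiv_of_not_isAlmostCritical h0 hβ hν hy hnot ?_
    linarith [norm_le_norm_add_norm_sub' y y₀]
  by_cases hp : ∃ p, IsAlmostCritical φ β ν p ∧ ‖p - y₀‖ < κ
  · obtain ⟨p, hp, hpy₀⟩ := hp
    have hball {y : E} (hy : ‖y - p‖ < 2 * κ + κ) : ‖y - y₀‖ < 4 * κ := by
      linarith [norm_sub_le_norm_sub_add_norm_sub y p y₀]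
    refine ⟨_, isBarrier_collarFun (ρ := 2 * κ) (q := p) (by positivity) hκ.le hε
      (by rw [norm_sub_rev]; linarith)
      (fun y hy hlow hhigh => hslope hy (hball hhigh) fun hcrit => ?_)
      fun y hy hhigh => hnear y hy (hball hhigh)⟩
    linarith [hsep y p hcrit hp (by linarith)]
  · push Not at hp
    refine ⟨_, isBarrier_collarFun (ρ := 0) (q := y₀) (by positivity) hκ.le hε (by simp)
      (fun y hy _ hhigh => hslope hy (by linarith) fun hcrit => ?_)
      fun y hy hhigh => hnear y hy (by linarith)⟩
    linarith [hp y hcrit]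

theorem exists_isBarrier_of_lt_norm (h0 : 0 ≤ c - ε) (hβ : c + ε ≤ β) (hν : 0 < ν)
    (hbdd : ∀ u, IsAlmostCritical φ β ν u → ‖u‖ ≤ M) (hy₀ : 2 * M + 1 < ‖y₀‖)
    (hε : 2 * ε < ν / 6) : ∃ e, IsBarrier φ c ε κ (ν / (2 * (1 + ‖y₀‖))) y₀ e := by
  have hslope {y : E} (hy : |φ y - c| ≤ ε) (hyy₀ : ‖y - y₀‖ < 0 + (1 + ‖y₀‖) / 2) :
      2 * (ν / (3 * (1 + ‖y₀‖))) ≤ ‖fderiv ℝ φ y‖ := by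
    have hbound : ν / (3 / 2 * (1 + ‖y₀‖)) ≤ ‖fderiv ℝ φ y‖ := by
      refine div_le_norm_fderiv_of_not_isAlmostCritical h0 hβ hν hy (fun hcrit => ?_) ?_
      · have htri := norm_le_norm_add_norm_sub' y₀ y
        rw [norm_sub_rev] at htri
        linarith [hbdd y hcrit]
      · linarith [norm_le_norm_add_norm_sub' y y₀]
    convert hbound using 1
    field_simp
  refine ⟨_, isBarrier_collarFun (s := ν / (3 * (1 + ‖y₀‖))) (ρ := 0) (w := (1 + ‖y₀‖) / 2)
    (q := y₀) (by positivity) (by positivity) ?_ (by simp) (fun y hy _ => hslope hy)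
    fun y hy hyy₀ => le_trans ?_ (hslope hy hyy₀)⟩
  · convert hε using 1
    field_simp
    norm_num
  · rw [← mul_div_assoc, div_le_div_iff₀ (by positivity) (by positivity)]
    nlinarith [norm_nonneg y₀]

theorem DiscreteCerami.exists_isBarrier (hφm : DiscreteCerami φ β M m) :
    ∃ ε₁ > 0, ∃ ν > 0, ∀ c ε, ε ≤ ε₁ → 0 ≤ c - ε → c + ε ≤ β → ∀ y₀ ν',
      (∀ y, |φ y - c| ≤ ε → ‖y - y₀‖ < m / 8 → ν' ≤ ‖fderiv ℝ φ y‖) →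
        ∃ e, IsBarrier φ c ε (m / 32) (min ν' (ν / (1 + ‖y₀‖))) y₀ e := by
  have hm := hφm.gap_pos
  have hM := hφm.radius_nonneg
  obtain ⟨ν₁, hν₁, hbdd⟩ := hφm.bounded
  obtain ⟨ν₂, hν₂, hsep⟩ := hφm.separated (m / 32) (by positivity)
  have hν : 0 < min ν₁ ν₂ := lt_min hν₁ hν₂
  generalize hmin : min ν₁ ν₂ = ν at hν
  have hνν₁ : ν ≤ ν₁ := hmin ▸ min_le_left _ _
  have hνν₂ : ν ≤ ν₂ := hmin ▸ min_le_right _ _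
  set R := 2 * M + 2 + m / 8 with hR
  have : 0 < R := by positivity
  refine ⟨ν / R / 2 * (m / 32) / 4, by positivity, ν / 2, by positivity,
    fun c ε hε h0 hβ y₀ ν' hnear => ?_⟩
  have hgain : 0 < ν / R / 2 * (m / 32) := by positivity
  rcases le_or_gt ‖y₀‖ (2 * M + 1) with hy₀ | hy₀
  · exact exists_isBarrier_of_norm_le (R := R) h0 hβ (by positivity) hν
      (fun u v hu hv huv => hsep u v (hu.mono hνν₂) (hv.mono hνν₂) (by linarith))
      (by linarith) (by linarith)
      fun y hy hyy₀ => (min_le_left _ _).trans (hnear y hy (by linarith))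
  · have hratio : ν / R / 2 * (m / 32) ≤ ν / 8 := by
      rw [div_div, div_mul_eq_mul_div, div_le_iff₀ (by positivity)]
      nlinarith
    obtain ⟨e, he⟩ := exists_isBarrier_of_lt_norm (κ := m / 32) h0 hβ hν
      (fun u hu => hbdd u (hu.mono hνν₁)) hy₀ (by linarith)
    refine ⟨e, he.mono ((min_le_right _ _).trans_eq ?_)⟩
    field_simp

theorem DiscreteCerami.exists_isBarrier_of_isCompact [CompleteSpace E]
    (hφm : DiscreteCerami φ β M m) (hφ : ContDiff ℝ 1 φ) (hc : 0 < c) (hcβ : c < β) {ε₀ : ℝ}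
    (hε₀ : 0 < ε₀) (hiso : ∀ p, fderiv ℝ φ p = 0 → |φ p - c| ≤ ε₀ → φ p = c) :
    ∃ ε > 0, ε < c ∧ ∀ A, IsCompact A → ∃ ν > 0, ∀ y₀ ∈ A,
      (∀ p, fderiv ℝ φ p = 0 → φ p = c → m / 4 ≤ ‖y₀ - p‖) →
        ∃ e, IsBarrier φ c ε (m / 32) ν y₀ e := by
  obtain ⟨ε₁, hε₁, ν, hν, hbarrier⟩ := hφm.exists_isBarrier
  obtain ⟨ε, hε, hmin⟩ := exists_between
    (show 0 < min (min ε₁ ε₀) (min c (β - c)) from by have := sub_pos.2 hcβ; positivity)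
  simp only [lt_min_iff] at hmin
  obtain ⟨⟨hεε₁, hεε₀⟩, hεc, hεβ⟩ := hmin
  refine ⟨ε, hε, hεc, fun A hA => ?_⟩
  obtain ⟨ν₀, hν₀, hnear⟩ := hφm.exists_le_norm_fderiv_of_isCompact hφ (sub_nonneg.2 hεc.le)
    (by linarith) (fun p hp hpc => hiso p hp (hpc.trans hεε₀.le)) hA
  obtain ⟨R, hR, hAR⟩ := hA.isBounded.exists_pos_norm_le
  refine ⟨min ν₀ (ν / (1 + R)), by positivity, fun y₀ hy₀ hfar => ?_⟩
  obtain ⟨e, he⟩ := hbarrier c ε hεε₁.le (sub_nonneg.2 hεc.le) (by linarith) y₀ ν₀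
    (hnear y₀ hy₀ hfar)
  refine ⟨e, he.mono ?_⟩
  gcongr
  exact hAR y₀ hy₀

end Barrier

section AntipodallyColorable

variable {E F κ : Type*} [NormedAddCommGroup E] [NormedAddCommGroup F] {S T : Set E}
  {C D : Finset κ}

theorem AntipodallyColorable.mono (hS : AntipodallyColorable S C) (hTS : T ⊆ S) (hCD : C ⊆ D) :
    AntipodallyColorable T D := by
  obtain ⟨lab, δ, hδ, hlab⟩ := hS
  exact ⟨lab, δ, hδ, fun x hx => hCD (hlab.mem x (hTS hx)), fun x hx => hlab.neg x (hTS hx),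
    fun x hx y hy => hlab.sign_eq x (hTS hx) y (hTS hy)⟩

theorem antipodallyColorable_empty [Nonempty κ] :
    AntipodallyColorable (∅ : Set E) (∅ : Finset κ) :=
  ⟨fun _ => (Classical.arbitrary κ, true), 1, one_pos, by simp, by simp, by simp⟩

theorem AntipodallyColorable.union [DecidableEq κ] (hS : AntipodallyColorable S C)
    (hT : AntipodallyColorable T D) (hTneg : ∀ x ∈ T, -x ∈ T) (hCD : Disjoint C D) :
    AntipodallyColorable (S ∪ T) (C ∪ D) := by
  classical
  obtain ⟨labS, δS, hδS, hlabS⟩ := hS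
  obtain ⟨labT, δT, hδT, hlabT⟩ := hT
  have hneg_mem (x : E) : -x ∈ T ↔ x ∈ T :=
    ⟨fun hx => neg_neg x ▸ hTneg _ hx, hTneg x⟩
  have hne {x y : E} (hx : x ∈ T) (hy : y ∈ S) : (labT x).1 ≠ (labS y).1 := fun heq =>
    Finset.disjoint_left.1 hCD (hlabS.mem y hy) (heq ▸ hlabT.mem x hx)
  refine ⟨fun x => if x ∈ T then labT x else labS x, min δS δT, lt_min hδS hδT,
    fun x hx => ?_, fun x hx => ?_, fun x hx y hy hxy heq => ?_⟩
  · by_cases hxT : x ∈ T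
    · simpa [hxT] using Or.inr (hlabT.mem x hxT)
    · simpa [hxT] using Or.inl (hlabS.mem x (hx.resolve_right hxT))
  · by_cases hxT : x ∈ T
    · simpa [hneg_mem, hxT] using hlabT.neg x hxT
    · simpa [hneg_mem, hxT] using hlabS.neg x (hx.resolve_right hxT)
  · obtain ⟨hxyS, hxyT⟩ := lt_min_iff.1 hxy
    by_cases hxT : x ∈ T <;> by_cases hyT : y ∈ T <;>
      simp only [hxT, hyT, if_true, if_false] at heq ⊢
    · exact hlabT.sign_eq x hxT y hyT hxyT heq
    · exact absurd heq (hne hxT (hy.resolve_right hyT))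
    · exact absurd heq.symm (hne hyT (hx.resolve_right hxT))
    · exact hlabS.sign_eq x (hx.resolve_right hxT) y (hy.resolve_right hyT) hxyS heq

theorem exists_sign_neg_eq_not (E : Type*) [AddCommGroup E] [IsAddTorsionFree E] :
    ∃ s : E → Bool, ∀ x ≠ 0, s (-x) = !s x := by
  classical
  refine ⟨fun x => decide (WellOrderingRel x (-x)), fun x hx => ?_⟩
  have hne : x ≠ -x := fun h => hx (self_eq_neg.1 h)
  rcases trichotomous_of WellOrderingRel x (-x) with hlt | heq | hgt
  · simp [hlt, asymm hlt]
  · exact absurd heq hne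
  · simp [hgt, asymm hgt]

theorem antipodallyColorable_of_uniformContinuousOn [IsAddTorsionFree F] {K : Set F} {m : ℝ}
    {h : E → F} {i : κ} (hm : 0 < m) (hK : ∀ p ∈ K, -p ∈ K) (hK0 : (0 : F) ∉ K)
    (hsep : ∀ p ∈ K, ∀ q ∈ K, ‖p - q‖ < m → p = q) (hT : ∀ x ∈ T, -x ∈ T)
    (hh : UniformContinuousOn h T) (hodd : ∀ x ∈ T, h (-x) = -h x)
    (hnear : ∀ x ∈ T, h x ∈ Metric.thickening (m / 4) K) (hi : K.Nonempty → i ∈ C) :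
    AntipodallyColorable T C := by
  simp only [Metric.mem_thickening_iff, dist_eq_norm] at hnear
  choose! cen hcenK hcen using hnear
  obtain ⟨s, hs⟩ := exists_sign_neg_eq_not F
  obtain ⟨δ, hδ, huc⟩ := Metric.uniformContinuousOn_iff.1 hh (m / 4) (by positivity)
  have hcen_neg (x : E) (hx : x ∈ T) : cen (-x) = -cen x := by
    refine hsep _ (hcenK _ (hT x hx)) _ (hK _ (hcenK x hx)) ?_
    have htri := norm_sub_le_norm_sub_add_norm_sub (cen (-x)) (-h x) (-cen x)
    have hneg : ‖-h x - -cen x‖ < m / 4 := by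
      rw [← neg_sub', norm_neg]
      exact hcen x hx
    linarith [hodd x hx ▸ hcen (-x) (hT x hx), norm_sub_rev (-h x) (cen (-x))]
  refine ⟨fun x => (i, s (cen x)), δ, hδ, fun x hx => hi ⟨_, hcenK x hx⟩, fun x hx => ?_,
    fun x hx y hy hxy _ => ?_⟩
  · rw [flipSign, hcen_neg x hx, hs _ (ne_of_mem_of_not_mem (hcenK x hx) hK0)]
  · have hcenxy : cen x = cen y := by
      refine hsep _ (hcenK x hx) _ (hcenK y hy) ?_
      have hhxy := huc x hx y hy (by rwa [dist_eq_norm])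
      rw [dist_eq_norm] at hhxy
      have htri₁ := norm_sub_le_norm_sub_add_norm_sub (cen x) (h x) (cen y)
      have htri₂ := norm_sub_le_norm_sub_add_norm_sub (h x) (h y) (cen y)
      linarith [hcen x hx, hcen y hy, norm_sub_rev (h x) (cen x)]
    rw [hcenxy]

end AntipodallyColorable

section OddDeformation

variable {E H : Type*} [NormedAddCommGroup E] [NormedAddCommGroup H] {φ : H → ℝ} {L : E → H}
  {B : Set E} {s t : ℝ}

/-- `h` is an odd map into `{φ ≤ t}` on the compact symmetric set `X ⊆ B`, and agrees with `L` on
the part of `B` where `φ ∘ L ≤ 0`, all of which belongs to `X`. -/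
structure IsOddDeformation (φ : H → ℝ) (L : E → H) (B : Set E) (t : ℝ) (X : Set E) (h : E → H) :
    Prop where
  subset : X ⊆ B
  isCompact : IsCompact X
  neg_mem : ∀ x ∈ X, -x ∈ X
  continuousOn : ContinuousOn h X
  odd : ∀ x ∈ X, h (-x) = -h x
  le : ∀ x ∈ X, φ (h x) ≤ t
  mem_of_nonpos : ∀ x ∈ B, φ (L x) ≤ 0 → x ∈ X
  eq_of_nonpos : ∀ x ∈ B, φ (L x) ≤ 0 → h x = L x

theorem IsOddDeformation.exists_lower [InnerProductSpace ℝ H] [CompleteSpace H] {X : Set E}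
    {h : E → H} {c ε κ ν : ℝ} {F : Set H} (hh : IsOddDeformation φ L B t X h)
    (hφ : ContDiff ℝ 1 φ) (heven : φ.Even) (hε : 0 < ε) (hεc : ε ≤ c) (hκ : 0 < κ) (hν : 0 < ν)
    (ht : t ≤ c + ε) (hF : IsClosed F) (hFneg : ∀ y ∈ F, -y ∈ F)
    (hFmem : ∀ y, φ y ≤ c - ε → y ∈ F)
    (hbarrier : ∀ y ∈ h '' X, y ∈ F → c - ε < φ y → ∃ e, IsBarrier φ c ε κ ν y e) :
    ∃ g, IsOddDeformation φ L B (c - ε / 4) (X ∩ h ⁻¹' F) g := by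
  have hcompact : IsCompact (X ∩ h ⁻¹' F) := hh.isCompact.of_isClosed_subset
    (hh.continuousOn.preimage_isClosed_of_isClosed hh.isCompact.isClosed hF) Set.inter_subset_left
  have hneg (x : E) (hx : x ∈ X ∩ h ⁻¹' F) : -x ∈ X ∩ h ⁻¹' F :=
    ⟨hh.neg_mem x hx.1, by simpa [hh.odd x hx.1] using hFneg _ hx.2⟩
  have : CompactSpace (X ∩ h ⁻¹' F : Set E) := isCompact_iff_compactSpace.1 hcompact
  choose! e he using hbarrier
  obtain ⟨g, ⟨hgodd, hgfix, -⟩, hgle⟩ := exists_mem_descentClass_le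
    (X := (X ∩ h ⁻¹' F : Set E)) (σ := fun x => ⟨-x, hneg x x.2⟩)
    (h := ⟨fun x => h x, (hh.continuousOn.mono Set.inter_subset_left).domRestrict⟩)
    (e := fun x => e (h x)) hφ heven hε hκ hν (fun x => hh.odd x x.2.1)
    (fun x => (hh.le x x.2.1).trans ht) (fun x hx => he _ ⟨x, x.2.1, rfl⟩ x.2.2 hx)
  have hext (x : (X ∩ h ⁻¹' F : Set E)) : Function.extend Subtype.val g 0 x.1 = g x :=
    Subtype.val_injective.extend_apply g 0 x
  have hlow (x : E) (hx : x ∈ B) (hx0 : φ (L x) ≤ 0) : φ (h x) ≤ c - ε := by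
    rw [hh.eq_of_nonpos x hx hx0]
    linarith
  have hmem (x : E) (hx : x ∈ B) (hx0 : φ (L x) ≤ 0) : x ∈ X ∩ h ⁻¹' F :=
    ⟨hh.mem_of_nonpos x hx hx0, hFmem _ (hlow x hx hx0)⟩
  refine ⟨Function.extend Subtype.val g 0, Set.inter_subset_left.trans hh.subset, hcompact, hneg,
    ?_, fun x hx => ?_, fun x hx => ?_, hmem, fun x hx hx0 => ?_⟩
  · rw [continuousOn_iff_continuous_domRestrict]
    exact g.continuous.congr fun x => (hext x).symm
  · exact (hext ⟨-x, hneg x hx⟩).trans ((hgodd ⟨x, hx⟩).trans (congrArg _ (hext ⟨x, hx⟩).symm))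
  · exact (congrArg φ (hext ⟨x, hx⟩)).trans_le (hgle _)
  · exact (hext ⟨x, hmem x hx hx0⟩).trans
      ((hgfix _ (hlow x hx hx0)).trans (hh.eq_of_nonpos x hx hx0))

/-- The level `t` is admissible if an odd deformation of `L` into `{φ ≤ t}` exists on all of `B`
but a set antipodally coloured by the values of `C` above `t`. -/
def IsAdmissibleLevel (φ : H → ℝ) (L : E → H) (B : Set E) (C : Finset ℝ) (t : ℝ) : Prop :=
  ∃ X h, IsOddDeformation φ L B t X h ∧ AntipodallyColorable (B \ X) (C.filter (t < ·))

theorem isAdmissibleLevel_of_isCompact {C : Finset ℝ} (hB : IsCompact B) (hBneg : ∀ x ∈ B, -x ∈ B)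
    (hL : ContinuousOn L B) (hodd : ∀ x ∈ B, L (-x) = -L x) (hle : ∀ x ∈ B, φ (L x) ≤ t) :
    IsAdmissibleLevel φ L B C t :=
  ⟨B, L, ⟨subset_rfl, hB, hBneg, hL, hodd, hle, fun _ hx _ => hx, fun _ _ _ => rfl⟩,
    antipodallyColorable_empty.mono (by simp) (Finset.empty_subset _)⟩

end OddDeformation

section CriticalLevel

variable {H : Type*} [NormedAddCommGroup H] {φ : H → ℝ} {β M m c : ℝ}

/-- The critical points of `φ` at the level `c`. -/
def criticalSet [NormedSpace ℝ H] (φ : H → ℝ) (c : ℝ) : Set H := {p | fderiv ℝ φ p = 0 ∧ φ p = c}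

theorem neg_mem_criticalSet [NormedSpace ℝ H] (heven : φ.Even) {p : H}
    (hp : p ∈ criticalSet φ c) : -p ∈ criticalSet φ c :=
  ⟨by rw [odd_fderiv_of_even heven p, hp.1, neg_zero], (heven p).trans hp.2⟩

theorem exists_pos_forall_abs_sub_le_eq (C : Finset ℝ) (c : ℝ) :
    ∃ ε > 0, ∀ t ∈ C, |t - c| ≤ ε → t = c := by
  have hmem : ((C.erase c : Finset ℝ) : Set ℝ)ᶜ ∈ 𝓝 c :=
    (Finset.isClosed _).isOpen_compl.mem_nhds (by simp)
  obtain ⟨ε, hε, hball⟩ := Metric.nhds_basis_closedBall.mem_iff.1 hmem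
  refine ⟨ε, hε, fun t ht htc => ?_⟩
  by_contra hne
  exact hball (Metric.mem_closedBall.2 htc) (Finset.mem_erase.2 ⟨hne, ht⟩)

variable {E : Type*} [NormedAddCommGroup E] {L : E → H} {B X : Set E} {h : E → H} {C : Finset ℝ}
  {t : ℝ}

theorem neg_mem_thickening_criticalSet [NormedSpace ℝ H] (heven : φ.Even) {δ : ℝ} {y : H}
    (hy : y ∈ Metric.thickening δ (criticalSet φ c)) :
    -y ∈ Metric.thickening δ (criticalSet φ c) := by
  obtain ⟨p, hp, hlt⟩ := Metric.mem_thickening_iff.1 hy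
  exact Metric.mem_thickening_iff.2 ⟨-p, neg_mem_criticalSet heven hp, by rwa [dist_neg_neg]⟩

theorem IsOddDeformation.neg_mem_preimage_thickening [NormedSpace ℝ H]
    (hh : IsOddDeformation φ L B t X h) (heven : φ.Even) {δ : ℝ} {x : E}
    (hx : x ∈ X ∩ h ⁻¹' Metric.thickening δ (criticalSet φ c)) :
    -x ∈ X ∩ h ⁻¹' Metric.thickening δ (criticalSet φ c) :=
  ⟨hh.neg_mem x hx.1, by simpa [hh.odd x hx.1] using neg_mem_thickening_criticalSet heven hx.2⟩

theorem IsOddDeformation.antipodallyColorable_preimage_thickening [NormedSpace ℝ H]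
    (hh : IsOddDeformation φ L B t X h) (heven : φ.Even) (hφ0 : φ 0 = 0)
    (hφm : DiscreteCerami φ β M m) (hc : 0 < c) (hcβ : c < β)
    (hC : ∀ p, fderiv ℝ φ p = 0 → φ p ∈ C) :
    AntipodallyColorable (X ∩ h ⁻¹' Metric.thickening (m / 4) (criticalSet φ c))
      (C.filter (· = c)) := by
  have hlevel (p : H) (hp : p ∈ criticalSet φ c) : φ p ∈ Set.Icc 0 β := hp.2 ▸ ⟨hc.le, hcβ.le⟩
  have htf : IsAddTorsionFree H := .of_isTorsionFree ℝ H
  refine antipodallyColorable_of_uniformContinuousOn (i := c) hφm.gap_pos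
    (fun p hp => neg_mem_criticalSet heven hp) (fun h0 => hc.ne (hφ0.symm.trans h0.2))
    (fun p hp q hq => hφm.eq_of_norm_sub_lt hp.1 hq.1 (hlevel p hp) (hlevel q hq))
    (fun x hx => hh.neg_mem_preimage_thickening heven hx)
    ((hh.isCompact.uniformContinuousOn_of_continuous hh.continuousOn).mono fun x hx => hx.1)
    (fun x hx => hh.odd x hx.1) (fun x hx => hx.2) fun ⟨p, hp⟩ => ?_
  exact Finset.mem_filter.2 ⟨hp.2 ▸ hC p hp.1, rfl⟩

theorem exists_forall_isAdmissibleLevel_sub [InnerProductSpace ℝ H] [CompleteSpace H]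
    (hφ : ContDiff ℝ 1 φ) (heven : φ.Even) (hφ0 : φ 0 = 0)
    (hφm : DiscreteCerami φ β M m) (hc : 0 < c) (hcβ : c < β)
    (hC : ∀ p, fderiv ℝ φ p = 0 → φ p ∈ C) :
    ∃ ε > 0, ∀ t, c ≤ t → t ≤ c + ε → IsAdmissibleLevel φ L B C t →
      IsAdmissibleLevel φ L B C (c - ε / 4) := by
  obtain ⟨ε₀, hε₀, hiso⟩ := exists_pos_forall_abs_sub_le_eq C c
  obtain ⟨ε, hε, hεc, hbarrier⟩ := hφm.exists_isBarrier_of_isCompact hφ hc hcβ hε₀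
    fun p hp => hiso _ (hC p hp)
  refine ⟨ε, hε, fun t hct ht ⟨X, h, hh, hcol⟩ => ?_⟩
  have hm := hφm.gap_pos
  set F : Set H := {y | φ y ≤ c - ε} ∪ (Metric.thickening (m / 4) (criticalSet φ c))ᶜ
  have hFclosed : IsClosed F := (isClosed_le hφ.continuous continuous_const).union
    Metric.isOpen_thickening.isClosed_compl
  have hFneg (y : H) (hy : y ∈ F) : -y ∈ F := hy.imp (fun hy => (heven y).trans_le hy)
    fun hy hy' => hy (neg_neg y ▸ neg_mem_thickening_criticalSet heven hy')
  obtain ⟨ν, hν, hbarrier⟩ := hbarrier _ (hh.isCompact.image_of_continuousOn hh.continuousOn)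
  obtain ⟨g, hg⟩ := hh.exists_lower hφ heven hε hεc.le (by positivity) hν ht hFclosed hFneg
    (fun y hy => Or.inl hy) fun y hyX hyF hy => hbarrier y hyX fun p hp hpc =>
      not_lt.1 fun hlt => hyF.resolve_left hy.not_ge
        (Metric.mem_thickening_iff.2 ⟨p, ⟨hp, hpc⟩, (dist_eq_norm y p).trans_lt hlt⟩)
  have hcover : B \ (X ∩ h ⁻¹' F) ⊆
      B \ X ∪ X ∩ h ⁻¹' Metric.thickening (m / 4) (criticalSet φ c) := by
    rintro x ⟨hxB, hxF⟩
    by_cases hxX : x ∈ X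
    · exact Or.inr ⟨hxX, not_not.1 fun hfar => hxF ⟨hxX, Or.inr hfar⟩⟩
    · exact Or.inl ⟨hxB, hxX⟩
  have hcol_near := hh.antipodallyColorable_preimage_thickening heven hφ0 hφm hc hcβ hC
  refine ⟨_, g, hg, (hcol.union hcol_near
    (fun x hx => hh.neg_mem_preimage_thickening heven hx) ?_).mono hcover ?_⟩
  · refine Finset.disjoint_filter.2 fun s _ hs hsc => ?_
    linarith
  · refine Finset.union_subset (Finset.monotone_filter_right _ fun s _ hs => ?_)
      (Finset.monotone_filter_right _ fun s _ hs => ?_) <;> linarith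

end CriticalLevel

section Minimax

variable {E H : Type*} [NormedAddCommGroup E] [NormedAddCommGroup H] {φ : H → ℝ} {L : E → H}
  {B : Set E} {C : Finset ℝ} {a r : ℝ}

theorem exists_lt_isAdmissibleLevel [InnerProductSpace ℝ H] [CompleteSpace H]
    (hφ : ContDiff ℝ 1 φ) (heven : φ.Even) (hφ0 : φ 0 = 0)
    (hφm : ∀ β > 0, ∃ M m, DiscreteCerami φ β M m) (hC : ∀ p, fderiv ℝ φ p = 0 → φ p ∈ C)
    (ha : 0 < a) (hadm : ∃ t, IsAdmissibleLevel φ L B C t) :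
    ∃ t < a, IsAdmissibleLevel φ L B C t := by
  by_contra! hlow
  have hbdd : BddBelow {t | IsAdmissibleLevel φ L B C t} :=
    ⟨a, fun t ht => not_lt.1 fun hta => hlow t hta ht⟩
  have hac : a ≤ sInf {t | IsAdmissibleLevel φ L B C t} :=
    le_csInf hadm fun t ht => not_lt.1 fun hta => hlow t hta ht
  set c := sInf {t | IsAdmissibleLevel φ L B C t}
  obtain ⟨M, m, hm⟩ := hφm (c + 1) (by linarith)
  obtain ⟨ε, hε, hstep⟩ := exists_forall_isAdmissibleLevel_sub (L := L) (B := B) hφ heven hφ0 hm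
    (ha.trans_le hac) (lt_add_one c) hC
  obtain ⟨t, ht, htc⟩ := exists_lt_of_csInf_lt hadm (lt_add_of_pos_right c hε)
  linarith [csInf_le hbdd (hstep t (csInf_le hbdd ht) htc.le ht)]

theorem IsOddDeformation.exists_thickening_diff_subset {X : Set E} {h : E → H} {t R : ℝ}
    (hh : IsOddDeformation φ L (Metric.closedBall 0 R) t X h) (hta : t < a)
    (hsphere : ∀ p, ‖p‖ = r → a ≤ φ p)
    (hsmall : ∀ x ∈ X, ‖h x‖ < r → ‖x‖ + 1 ≤ R) :
    ∃ ρ > 0, Metric.thickening ρ {x ∈ X | ‖h x‖ < r} \ {x ∈ X | ‖h x‖ < r} ⊆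
      Metric.closedBall 0 R \ X := by
  have hclosed {S : Set H} (hS : IsClosed S) : IsClosed (X ∩ h ⁻¹' S) :=
    hh.continuousOn.preimage_isClosed_of_isClosed hh.isCompact.isClosed hS
  have hinner : IsCompact (X ∩ h ⁻¹' {y | ‖y‖ ≤ r}) := hh.isCompact.of_isClosed_subset
    (hclosed (isClosed_le continuous_norm continuous_const)) Set.inter_subset_left
  have hdisj : Disjoint (X ∩ h ⁻¹' {y | ‖y‖ ≤ r}) (X ∩ h ⁻¹' {y | r ≤ ‖y‖}) := by
    refine Set.disjoint_left.2 fun x hx hx' => ?_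
    linarith [hh.le x hx.1, hsphere (h x) (le_antisymm hx.2 hx'.2)]
  obtain ⟨ρ, hρ, hsep⟩ := Metric.exists_pos_forall_lt_edist hinner
    (hclosed (isClosed_le continuous_const continuous_norm)) hdisj
  refine ⟨min ρ 1, by positivity, fun x ⟨hx, hxO⟩ => ?_⟩
  obtain ⟨o, ⟨hoX, hor⟩, hxo⟩ := Metric.mem_thickening_iff.1 hx
  obtain ⟨hxoρ, hxo1⟩ := lt_min_iff.1 hxo
  refine ⟨mem_closedBall_zero_iff.2 ?_, fun hxX => ?_⟩
  · rw [dist_eq_norm] at hxo1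
    linarith [hsmall o hoX hor, norm_le_norm_add_norm_sub' x o]
  · have hlt := hsep o ⟨hoX, hor.le⟩ x ⟨hxX, not_lt.1 fun hxr => hxO ⟨hxX, hxr⟩⟩
    rw [edist_nndist, ENNReal.coe_lt_coe, ← NNReal.coe_lt_coe, coe_nndist, dist_comm] at hlt
    exact lt_asymm hlt hxoρ

theorem finrank_le_card_of_forall_fderiv_eq_zero [InnerProductSpace ℝ H] [CompleteSpace H]
    (hφ : ContDiff ℝ 1 φ) (heven : φ.Even) (hφ0 : φ 0 = 0)
    (hφm : ∀ β > 0, ∃ M m, DiscreteCerami φ β M m) (hC : ∀ p, fderiv ℝ φ p = 0 → φ p ∈ C)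
    (hr : 0 < r) (ha : 0 < a) (hsphere : ∀ p, ‖p‖ = r → a ≤ φ p)
    (W : Submodule ℝ H) [FiniteDimensional ℝ W] (hW : ∃ R, ∀ p ∈ W, R ≤ ‖p‖ → φ p < 0) :
    Module.finrank ℝ W ≤ C.card := by
  obtain ⟨R₀, hR₀⟩ := hW
  set R := max R₀ r + 1
  have hR₀R : R₀ + 1 ≤ R := add_le_add_left (le_max_left _ _) _
  have hrR : r + 1 ≤ R := add_le_add_left (le_max_right _ _) _
  have hball : IsCompact (Metric.closedBall (0 : W) R) := isCompact_closedBall 0 R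
  obtain ⟨T, hT⟩ := hball.bddAbove_image (hφ.continuous.comp continuous_subtype_val).continuousOn
  obtain ⟨t, hta, X, h, hh, hcol⟩ := exists_lt_isAdmissibleLevel hφ heven hφ0 hφm hC ha
    ⟨T, isAdmissibleLevel_of_isCompact (φ := φ) hball (L := ((↑) : W → H)) (by simp)
      continuous_subtype_val.continuousOn (by simp) fun x hx => hT ⟨x, hx, rfl⟩⟩
  have h0R : (0 : W) ∈ Metric.closedBall 0 R := Metric.mem_closedBall_self (by linarith)
  obtain ⟨ρ, hρ, hsub⟩ := hh.exists_thickening_diff_subset hta hsphere fun x hxX hxr => by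
    rcases lt_or_ge ‖x‖ R₀ with hx | hx
    · linarith
    · rw [hh.eq_of_nonpos x (hh.subset hxX) (hR₀ x x.2 hx).le] at hxr
      linarith [W.coe_norm x]
  have hbound := finrank_le_card_of_antipodallyColorable (O := {x ∈ X | ‖h x‖ < r})
    (hh.isCompact.isBounded.subset fun x hx => hx.1)
    ⟨hh.mem_of_nonpos 0 h0R hφ0.le, by simpa [hh.eq_of_nonpos 0 h0R hφ0.le] using hr⟩
    (fun x hx => ⟨hh.neg_mem x hx.1, by simpa [hh.odd x hx.1] using hx.2⟩) hρ
    (hcol.mono hsub subset_rfl)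
  exact hbound.trans (Finset.card_filter_le _ _)

end Minimax

section Envelope

variable {E F : Type*} [NormedAddCommGroup E] [NormedSpace ℝ E] [NormedAddCommGroup F]
  [NormedSpace ℝ F] {f : E × F → ℝ} {μ : E → F}

-- `f (x, μ x) - f (p, μ p)` lies between the increments of `f` from `p` to `x` with second
-- coordinate frozen at `μ p` and at `μ x`; strictness controls both.
theorem hasFDerivAt_of_forall_le {f' : E × F →L[ℝ] ℝ} {p : E}
    (hf : HasStrictFDerivAt f f' (p, μ p)) (hμ : ContinuousAt μ p)
    (hmax : ∀ x y, f (x, y) ≤ f (x, μ x)) :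
    HasFDerivAt (fun x => f (x, μ x)) (f'.comp (.inl ℝ E F)) p := by
  rw [hasFDerivAt_iff_isLittleO, Asymptotics.isLittleO_iff]
  intro c hc
  have hstrict := Asymptotics.isLittleO_iff.1 hf.isLittleO hc
  have hmoving : Tendsto (fun x => ((x, μ x), (p, μ x))) (𝓝 p) (𝓝 ((p, μ p), (p, μ p))) :=
    (tendsto_id.prodMk_nhds hμ).prodMk_nhds (tendsto_const_nhds.prodMk_nhds hμ)
  have hfrozen : Tendsto (fun x => ((x, μ p), (p, μ p))) (𝓝 p) (𝓝 ((p, μ p), (p, μ p))) :=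
    (tendsto_id.prodMk_nhds tendsto_const_nhds).prodMk_nhds tendsto_const_nhds
  filter_upwards [hmoving.eventually hstrict, hfrozen.eventually hstrict] with x hx hx'
  have hnorm : ‖((x - p, 0) : E × F)‖ = ‖x - p‖ := by simp [Prod.norm_def]
  simp only [Prod.mk_sub_mk, sub_self, hnorm, Real.norm_eq_abs, abs_le] at hx hx'
  simp only [ContinuousLinearMap.comp_apply, ContinuousLinearMap.inl_apply, Real.norm_eq_abs,
    abs_le]
  constructor <;> linarith [hmax p (μ x), hmax x (μ p)]

theorem contDiff_one_of_forall_le (hf : ContDiff ℝ 1 f) (hμ : Continuous μ)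
    (hmax : ∀ x y, f (x, y) ≤ f (x, μ x)) : ContDiff ℝ 1 fun x => f (x, μ x) := by
  have hderiv (p : E) : HasFDerivAt (fun x => f (x, μ x))
      ((fderiv ℝ f (p, μ p)).comp (.inl ℝ E F)) p :=
    hasFDerivAt_of_forall_le (hf.contDiffAt.hasStrictFDerivAt one_ne_zero) hμ.continuousAt hmax
  rw [contDiff_one_iff_fderiv, funext fun p => (hderiv p).fderiv]
  have := hf.continuous_fderiv one_ne_zero
  exact ⟨fun p => (hderiv p).differentiableAt, by fun_prop⟩

end Envelope

/-- `m p` is the strict minimiser of `I` on the fibre `p + X⁻`. Under (I5) this is what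
characterises the map `m : X⁺ → ℳ`; it makes `J (m p)` the maximum of `J` on that fibre. -/
structure IsFiberMin {P Q : Type*} (I : P × Q → ℝ) (m : P → P × Q) : Prop where
  fst_eq : ∀ p, (m p).1 = p
  lt : ∀ p q, q ≠ (m p).2 → I (m p) < I (p, q)

namespace IsFiberMin

variable {P Q : Type*} {I : P × Q → ℝ} {m : P → P × Q}

theorem mk_snd (hm : IsFiberMin I m) (p : P) : (p, (m p).2) = m p :=
  Prod.ext (hm.fst_eq p).symm rfl

theorem le (hm : IsFiberMin I m) (p : P) (q : Q) : I (m p) ≤ I (p, q) := by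
  rcases eq_or_ne q (m p).2 with rfl | hq
  · rw [hm.mk_snd]
  · exact (hm.lt p q hq).le

variable [NormedAddCommGroup P]

theorem Jfun_le (hm : IsFiberMin I m) (p : P) (q : Q) : Jfun I (p, q) ≤ Jfun I (m p) := by
  have := hm.le p q
  simp only [Jfun, hm.fst_eq]
  linarith

variable [NormedAddCommGroup Q]

theorem Jfun_neg (hm : IsFiberMin I m) (heven : I.Even) (p : P) :
    Jfun I (m (-p)) = Jfun I (m p) := by
  have hle (p : P) : Jfun I (m p) ≤ Jfun I (m (-p)) :=
    calc Jfun I (m p) = Jfun I (-p, -(m p).2) := by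
          rw [← Prod.neg_mk, hm.mk_snd]
          simp only [Jfun, heven (m p), Prod.fst_neg, norm_neg]
      _ ≤ Jfun I (m (-p)) := hm.Jfun_le _ _
  exact le_antisymm (by simpa using hle (-p)) (hle p)

theorem Jfun_zero (hm : IsFiberMin I m) (hI0 : I 0 = 0) (hI : ∀ u, 0 ≤ I u) :
    Jfun I (m 0) = 0 := by
  have hle := hm.le 0 0
  rw [Prod.mk_zero_zero, hI0] at hle
  simp [Jfun, hm.fst_eq, le_antisymm hle (hI _)]

theorem exists_norm_snd_le (hm : IsFiberMin I m) (hI : Continuous I)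
    (hcoercive : ∀ M : ℝ, ∃ R : ℝ, ∀ u : P × Q, R ≤ XNorm u → M ≤ ‖u.1‖ + I u)
    {p : ℕ → P} {p₀ : P} (hp : Tendsto p atTop (𝓝 p₀)) : ∃ C, ∀ n, ‖(m (p n)).2‖ ≤ C := by
  have hlim : Tendsto (fun n => ‖p n‖ + I (p n, 0)) atTop (𝓝 (‖p₀‖ + I (p₀, 0))) :=
    hp.norm.add ((hI.tendsto _).comp (hp.prodMk_nhds tendsto_const_nhds))
  obtain ⟨B, hB⟩ := hlim.bddAbove_range
  obtain ⟨R, hR⟩ := hcoercive (B + 1)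
  refine ⟨R, fun n => le_of_not_gt fun hlt => ?_⟩
  have hX : R ≤ XNorm (m (p n)) :=
    hlt.le.trans (Real.le_sqrt_of_sq_le (le_add_of_nonneg_left (sq_nonneg _)))
  have hlow := hR _ hX
  have hup : ‖p n‖ + I (p n, 0) ≤ B := hB ⟨n, rfl⟩
  rw [hm.fst_eq] at hlow
  linarith [hm.le (p n) 0]

variable [NormedSpace ℝ Q]

-- The values `I (m (p n))` are at most `I (p n, (m p₀).2) → I (m p₀)`, so a 𝒯-limit of `m (p n)`
-- minimises `I` on the fibre of `p₀`, and the values converge.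
theorem tendsto_of_TConv (hm : IsFiberMin I m) (hI : Continuous I)
    (hlsc : ∀ (u : ℕ → P × Q) (v : P × Q), TConv u v →
      ∀ c : ℝ, c < I v → ∀ᶠ n in atTop, c < I (u n))
    (hstrong : ∀ (u : ℕ → P × Q) (v : P × Q), TConv u v →
      Tendsto (fun n => I (u n)) atTop (𝓝 (I v)) → Tendsto u atTop (𝓝 v))
    {p : ℕ → P} {p₀ : P} {z : Q} (hp : Tendsto p atTop (𝓝 p₀))
    (hz : TConv (fun n => m (p n)) (p₀, z)) : Tendsto (fun n => m (p n)) atTop (𝓝 (m p₀)) := by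
  have hup : Tendsto (fun n => I (p n, (m p₀).2)) atTop (𝓝 (I (m p₀))) := by
    rw [← hm.mk_snd p₀]
    exact (hI.tendsto _).comp (hp.prodMk_nhds tendsto_const_nhds)
  have hlim_le : I (p₀, z) ≤ I (m p₀) := by
    refine le_of_forall_lt_imp_le_of_dense fun c hc => ge_of_tendsto hup ?_
    filter_upwards [hlsc _ _ hz c hc] with n hn
    exact hn.le.trans (hm.le _ _)
  obtain rfl : z = (m p₀).2 := by
    by_contra hne
    exact (hm.lt p₀ z hne).not_ge hlim_le
  rw [hm.mk_snd] at hz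
  refine hstrong _ _ hz (tendsto_order.2 ⟨hlsc _ _ hz, fun c hc => ?_⟩)
  filter_upwards [hup.eventually_lt_const hc] with n hn
  exact (hm.le _ _).trans_lt hn

protected theorem continuous (hm : IsFiberMin I m) (hI : Continuous I)
    (hrefl : Function.Surjective (NormedSpace.inclusionInDoubleDual ℝ Q))
    (hlsc : ∀ (u : ℕ → P × Q) (v : P × Q), TConv u v →
      ∀ c : ℝ, c < I v → ∀ᶠ n in atTop, c < I (u n))
    (hstrong : ∀ (u : ℕ → P × Q) (v : P × Q), TConv u v →
      Tendsto (fun n => I (u n)) atTop (𝓝 (I v)) → Tendsto u atTop (𝓝 v))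
    (hcoercive : ∀ M : ℝ, ∃ R : ℝ, ∀ u : P × Q, R ≤ XNorm u → M ≤ ‖u.1‖ + I u) :
    Continuous m := by
  refine continuous_iff_seqContinuous.2 fun p p₀ hp => tendsto_of_subseq_tendsto fun k hk => ?_
  have hpk := hp.comp hk
  obtain ⟨C, hC⟩ := hm.exists_norm_snd_le hI hcoercive hpk
  obtain ⟨z, ψ, hψ, hz⟩ := exists_subseq_tendsto_weakly hrefl hC
  have hpψ := hpk.comp hψ.tendsto_atTop
  refine ⟨ψ, hm.tendsto_of_TConv hI hlsc hstrong hpψ ⟨?_, hz⟩⟩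
  simpa only [hm.fst_eq, Function.comp_def] using hpψ

end IsFiberMin

section Reduction

variable {P Q : Type*} [NormedAddCommGroup P] [InnerProductSpace ℝ P] [NormedAddCommGroup Q]
  [NormedSpace ℝ Q] {I : P × Q → ℝ} {m : P → P × Q}

theorem contDiff_Jfun (hI : ContDiff ℝ 1 I) : ContDiff ℝ 1 (Jfun I) :=
  ((contDiff_fst.norm_sq ℝ).div_const 2).sub hI

theorem IsFiberMin.contDiff_Jfun_comp (hm : IsFiberMin I m) (hI : ContDiff ℝ 1 I)
    (hmc : Continuous m) : ContDiff ℝ 1 fun p => Jfun I (m p) := by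
  have hmax (p : P) (q : Q) : Jfun I (p, q) ≤ Jfun I (p, (m p).2) := by
    simpa only [hm.mk_snd] using hm.Jfun_le p q
  simpa only [hm.mk_snd] using contDiff_one_of_forall_le (contDiff_Jfun hI) hmc.snd hmax

theorem IsFiberMin.exists_forall_Jfun_neg (hm : IsFiberMin I m)
    (hsuper : ∀ (t : ℕ → ℝ) (u : ℕ → P × Q) (p : P), Tendsto t atTop atTop →
      Tendsto (fun n => (u n).1) atTop (𝓝 p) → p ≠ 0 →
      Tendsto (fun n => I (t n • u n) / t n ^ 2) atTop atTop)
    (W : Submodule ℝ P) [FiniteDimensional ℝ W] :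
    ∃ R, ∀ p ∈ W, R ≤ ‖p‖ → Jfun I (m p) < 0 := by
  by_contra! hcon
  choose x hxW hxk hx using fun k : ℕ => hcon (k + 1)
  have hpos (k : ℕ) : 0 < ‖x k‖ := lt_of_lt_of_le (by positivity) (hxk k)
  have hbound (k : ℕ) : I (m (x k)) / ‖x k‖ ^ 2 ≤ 1 / 2 := by
    have hxk := hx k
    rw [Jfun, hm.fst_eq] at hxk
    rw [div_le_iff₀ (pow_pos (hpos k) 2)]
    linarith
  have hunbounded : Tendsto (fun k => ‖x k‖) atTop atTop :=
    tendsto_atTop_mono hxk (tendsto_atTop_add_const_right _ _ tendsto_natCast_atTop_atTop)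
  have hsphere (k : ℕ) : (‖x k‖⁻¹ • ⟨x k, hxW k⟩ : W) ∈ Metric.sphere (0 : W) 1 := by
    rw [mem_sphere_zero_iff_norm, norm_smul, Submodule.coe_norm, norm_inv, norm_norm,
      inv_mul_cancel₀ (hpos k).ne']
  obtain ⟨z, hz, ψ, hψ, hlim⟩ := (isCompact_sphere (0 : W) 1).tendsto_subseq hsphere
  have hz0 : (z : P) ≠ 0 := fun h => by simp [Subtype.ext (a2 := (0 : W)) h] at hz
  have hfst : Tendsto (fun k => (‖x (ψ k)‖⁻¹ • m (x (ψ k))).1) atTop (𝓝 (z : P)) := by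
    simpa [Function.comp_def, hm.fst_eq] using (continuous_subtype_val.tendsto z).comp hlim
  have hblowup := hsuper _ _ _ (hunbounded.comp hψ.tendsto_atTop) hfst hz0
  obtain ⟨k, hk⟩ := (hblowup.eventually_gt_atTop (1 / 2)).exists
  rw [Function.comp_apply, smul_inv_smul₀ (hpos (ψ k)).ne'] at hk
  exact (hbound (ψ k)).not_gt hk

theorem HypI.le_Jfun {r a : ℝ} (hI : HypI I r a) {p : P} (hp : ‖p‖ = r) : a ≤ Jfun I (p, 0) := by
  obtain ⟨-, ha, ha0⟩ := hI.i6
  have hbdd : BddBelow {y : ℝ | ∃ p : P, ‖p‖ = r ∧ y = Jfun I (p, 0)} := by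
    by_contra hunbdd
    rw [Real.sInf_of_not_bddBelow hunbdd] at ha
    exact ha0.ne' ha
  exact ha ▸ csInf_le hbdd ⟨p, hp, rfl⟩

theorem IsMMap.isFiberMin (hm : IsMMap I m)
    (hI : ∀ u ∈ MSet I, ∀ v : Q, v ≠ 0 → I u < I (u + (0, v))) : IsFiberMin I m where
  fst_eq p := (hm.mem p).2
  lt p q hq := by
    have hsum : m p + (0, q - (m p).2) = (p, q) := Prod.ext (by simp [(hm.mem p).2]) (by simp)
    exact hsum ▸ hI (m p) (hm.mem p).1 (q - (m p).2) (sub_ne_zero.2 hq)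

end Reduction

section Action

variable {G P Q : Type*} [Group G] [NormedAddCommGroup Q]
  {act : G → P × Q → P × Q}

theorem actP_mul (hmul : ∀ g h : G, act (g * h) = act g ∘ act h)
    (hP : ∀ (g : G) (p : P), (act g ((p, 0) : P × Q)).2 = 0) (g h : G) (p : P) :
    actP act (g * h) p = actP act g (actP act h p) := by
  have hmk : act h (p, 0) = (actP act h p, 0) := Prod.ext rfl (hP h p)
  rw [actP, hmul, Function.comp_apply, hmk]
  rfl

theorem actP_inv_actP (hone : act 1 = id) (hmul : ∀ g h : G, act (g * h) = act g ∘ act h)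
    (hP : ∀ (g : G) (p : P), (act g ((p, 0) : P × Q)).2 = 0) (g : G) (p : P) :
    actP act g⁻¹ (actP act g p) = p := by
  rw [← actP_mul hmul hP, inv_mul_cancel, actP, hone, id]

variable [NormedAddCommGroup P]

-- Compare the distances from `act g (p, q)` to `actP act g p` and to its projection on `X⁺`, which
-- is also of the form `actP act g w`.
theorem act_fst_eq_actP (hone : act 1 = id) (hmul : ∀ g h : G, act (g * h) = act g ∘ act h)
    (hisom : ∀ (g : G) (u v : P × Q), XNorm (act g u - act g v) = XNorm (u - v))
    (hP : ∀ (g : G) (p : P), (act g ((p, 0) : P × Q)).2 = 0) (g : G) (p : P) (q : Q) :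
    (act g (p, q)).1 = actP act g p := by
  have hdist (w : P) : ‖(act g (p, q)).1 - actP act g w‖ ^ 2 + ‖(act g (p, q)).2‖ ^ 2
      = ‖p - w‖ ^ 2 + ‖q‖ ^ 2 := by
    have h := hisom g (p, q) (w, 0)
    rw [XNorm, XNorm, Real.sqrt_inj (by positivity) (by positivity)] at h
    simpa [actP, hP] using h
  have hproj : actP act g (actP act g⁻¹ (act g (p, q)).1) = (act g (p, q)).1 := by
    simpa using actP_inv_actP hone hmul hP g⁻¹ (act g (p, q)).1
  have hp := hdist p
  have hw := hdist (actP act g⁻¹ (act g (p, q)).1)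
  rw [hproj] at hw
  rw [sub_self, norm_zero] at hp hw
  have hsq : ‖(act g (p, q)).1 - actP act g p‖ ^ 2 = 0 := by
    nlinarith [sq_nonneg ‖p - actP act g⁻¹ (act g (p, q)).1‖,
      sq_nonneg ‖(act g (p, q)).1 - actP act g p‖]
  exact sub_eq_zero.1 (norm_eq_zero.1 (pow_eq_zero_iff two_ne_zero |>.1 hsq))

theorem IsFiberMin.Jfun_actP {I : P × Q → ℝ} {m : P → P × Q} (hm : IsFiberMin I m)
    (hone : act 1 = id) (hmul : ∀ g h : G, act (g * h) = act g ∘ act h)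
    (hisom : ∀ (g : G) (u v : P × Q), XNorm (act g u - act g v) = XNorm (u - v))
    (hJ : ∀ (g : G) (u : P × Q), Jfun I (act g u) = Jfun I u)
    (hP : ∀ (g : G) (p : P), (act g ((p, 0) : P × Q)).2 = 0) (g : G) (p : P) :
    Jfun I (m (actP act g p)) = Jfun I (m p) := by
  have hle (g : G) (p : P) : Jfun I (m p) ≤ Jfun I (m (actP act g p)) := by
    have hfst := act_fst_eq_actP hone hmul hisom hP g p (m p).2
    rw [hm.mk_snd] at hfst
    calc Jfun I (m p) = Jfun I (actP act g p, (act g (m p)).2) := by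
          rw [← hfst, Prod.mk.eta, hJ]
      _ ≤ Jfun I (m (actP act g p)) := hm.Jfun_le _ _
  refine le_antisymm ?_ (hle g p)
  simpa only [actP_inv_actP hone hmul hP] using hle g⁻¹ (actP act g p)

end Action

theorem exists_finset_or_exists_seq {α : Type*} {R : α → α → Prop}
    (hR : ∀ p q, R p q → R q p) (C : α → Prop) : (∃ S : Finset α, ∀ p, C p → ∃ q ∈ S, R q p) ∨
      ∃ u : ℕ → α, (∀ n, C (u n)) ∧ ∀ i j, i ≠ j → ¬ R (u i) (u j) := by
  by_contra! ⟨hfinite, hseq⟩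
  have : Std.Symm fun p q => ¬ R p q := ⟨fun _ _ h h' => h (hR _ _ h')⟩
  obtain ⟨u, hu, hne⟩ := exists_seq_of_forall_finset_exists' C (fun p q => ¬ R p q) fun S _ => by
    simpa using hfinite S
  obtain ⟨i, j, hij, h⟩ := hseq u hu
  exact hne hij h

section CeramiSequences

variable {P Q : Type*} [NormedAddCommGroup P] [InnerProductSpace ℝ P]
  {I : P × Q → ℝ} {m : P → P × Q} {β : ℝ}

theorem ceramiBdd_of_isAlmostCritical {u : ℕ → P}
    (hu : ∀ k : ℕ, IsAlmostCritical (fun p => Jfun I (m p)) β (1 / ((k : ℝ) + 1)) (u k)) :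
    CeramiBdd I m β u := by
  have hlim := tendsto_one_div_add_atTop_nhds_zero_nat (𝕜 := ℝ)
  refine ⟨squeeze_zero (fun k => by positivity) (fun k => (hu k).1.le) hlim, fun ε hε => ?_⟩
  filter_upwards [hlim.eventually_lt_const hε] with k hk
  obtain ⟨-, hlow, hup⟩ := hu k
  exact ⟨by linarith, by linarith⟩

theorem McondZero.exists_discreteCerami {G : Type*} [NormedAddCommGroup Q]
    {act : G → P × Q → P × Q} (hM : McondZero I m act β) (hfin : FinOrbits I m act β) :
    ∃ M d, DiscreteCerami (fun p => Jfun I (m p)) β M d := by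
  obtain ⟨⟨M, hM0, hbdd⟩, hsep⟩ := hM
  obtain ⟨d, hd, hliminf⟩ := hsep hfin
  refine ⟨M + 1, d, by linarith, hd, ?_, fun κ hκ => ?_⟩
  · by_contra! hcon
    choose u hu hlarge using fun k : ℕ => hcon (1 / ((k : ℝ) + 1)) Nat.one_div_pos_of_nat
    obtain ⟨k, hk⟩ := (hbdd u (ceramiBdd_of_isAlmostCritical hu) 1 one_pos).exists
    exact hk.not_gt (hlarge k)
  · by_contra! hcon
    choose u v hu hv hnear hfar using
      fun k : ℕ => hcon (1 / ((k : ℝ) + 1)) Nat.one_div_pos_of_nat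
    obtain ⟨k, hk⟩ := (hliminf u v (ceramiBdd_of_isAlmostCritical hu)
      (ceramiBdd_of_isAlmostCritical hv) (Eventually.of_forall hnear) κ hκ).exists
    exact hk.not_ge (hfar k)

end CeramiSequences

theorem exists_submodule_finrank_eq {K V : Type*} [DivisionRing K] [AddCommGroup V] [Module K V]
    (hV : ¬ FiniteDimensional K V) (n : ℕ) :
    ∃ W : Submodule K V, FiniteDimensional K W ∧ Module.finrank K W = n := by
  have hrank : (n : Cardinal) ≤ Module.rank K V :=
    Cardinal.natCast_le_aleph0.trans (not_lt.1 fun h => hV (Module.rank_lt_aleph0_iff.1 h))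
  obtain ⟨s, rfl, hs⟩ := exists_finset_linearIndependent_of_le_rank hrank
  exact ⟨Submodule.span K s, inferInstance, finrank_span_finset_eq_card hs⟩

theorem abstract_infinitely_many_critical_orbits_general
    {P Q : Type*} [NormedAddCommGroup P] [InnerProductSpace ℝ P] [CompleteSpace P]
    [NormedAddCommGroup Q] [NormedSpace ℝ Q] {G : Type*} [Group G] {I : P × Q → ℝ} {r a : ℝ}
    (hrefl : Function.Surjective (NormedSpace.inclusionInDoubleDual ℝ Q))
    (hI : ContDiff ℝ 1 I) (hI0 : I 0 = 0) (hI_nonneg : ∀ u, 0 ≤ I u)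
    (hlsc : ∀ (u : ℕ → P × Q) (v : P × Q), TConv u v →
      ∀ c : ℝ, c < I v → ∀ᶠ n in atTop, c < I (u n))
    (hstrong : ∀ (u : ℕ → P × Q) (v : P × Q), TConv u v →
      Tendsto (fun n => I (u n)) atTop (𝓝 (I v)) → Tendsto u atTop (𝓝 v))
    (hcoercive : ∀ M : ℝ, ∃ R : ℝ, ∀ u : P × Q, R ≤ XNorm u → M ≤ ‖u.1‖ + I u)
    {m : P → P × Q} (hm : IsFiberMin I m) (hr : 0 < r) (ha : 0 < a)
    (hsphere : ∀ p : P, ‖p‖ = r → a ≤ Jfun I (p, 0))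
    (hsuper : ∀ (t : ℕ → ℝ) (u : ℕ → P × Q) (p : P), Tendsto t atTop atTop →
      Tendsto (fun n => (u n).1) atTop (𝓝 p) → p ≠ 0 →
      Tendsto (fun n => I (t n • u n) / t n ^ 2) atTop atTop)
    (hdim : ¬ FiniteDimensional ℝ P) (heven : I.Even) {act : G → P × Q → P × Q}
    (hone : act 1 = id) (hmul : ∀ g h : G, act (g * h) = act g ∘ act h)
    (hisom : ∀ (g : G) (u v : P × Q), XNorm (act g u - act g v) = XNorm (u - v))
    (hJ : ∀ (g : G) (u : P × Q), Jfun I (act g u) = Jfun I u)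
    (hP : ∀ (g : G) (p : P), (act g ((p, 0) : P × Q)).2 = 0)
    (hM : ∀ β : ℝ, 0 < β → McondZero I m act β) :
    ∃ u : ℕ → P, (∀ n, fderiv ℝ (fun p => Jfun I (m p)) (u n) = 0) ∧
      ∀ i j : ℕ, i ≠ j → ∀ g : G, actP act g (u i) ≠ u j := by
  have hsymm (p q : P) : (∃ g, actP act g p = q) → ∃ g, actP act g q = p := by
    rintro ⟨g, rfl⟩
    exact ⟨g⁻¹, actP_inv_actP hone hmul hP g p⟩
  rcases exists_finset_or_exists_seq hsymm fun p => fderiv ℝ (fun p => Jfun I (m p)) p = 0 with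
    ⟨S, hS⟩ | hseq
  · classical
    have hvalues : ∀ p, fderiv ℝ (fun p => Jfun I (m p)) p = 0 →
        Jfun I (m p) ∈ S.image fun p => Jfun I (m p) := fun p hp => by
      obtain ⟨q, hq, g, rfl⟩ := hS p hp
      exact Finset.mem_image.2 ⟨q, hq, (hm.Jfun_actP hone hmul hisom hJ hP g q).symm⟩
    obtain ⟨W, _, hW⟩ :=
      exists_submodule_finrank_eq hdim ((S.image fun p => Jfun I (m p)).card + 1)
    have hmc := hm.continuous hI.continuous hrefl hlsc hstrong hcoercive
    have hbound := finrank_le_card_of_forall_fderiv_eq_zero (hm.contDiff_Jfun_comp hI hmc)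
      (hm.Jfun_neg heven) (hm.Jfun_zero hI0 hI_nonneg)
      (fun β hβ => (hM β hβ).exists_discreteCerami ⟨S, fun p hp _ _ => hS p hp⟩) hvalues hr ha
      (fun p hp => (hsphere p hp).trans (hm.Jfun_le p 0)) W (hm.exists_forall_Jfun_neg hsuper W)
    omega
  · simpa only [not_exists] using hseq

theorem abstract_infinitely_many_critical_orbits
    {P Q : Type*}
    [NormedAddCommGroup P] [InnerProductSpace ℝ P] [CompleteSpace P]
    [NormedAddCommGroup Q] [NormedSpace ℝ Q] [CompleteSpace Q]
    {G : Type*} [Group G]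
    (I : P × Q → ℝ) (r a : ℝ)
    (hI : HypI I r a)
    (m : P → P × Q) (hm : IsMMap I m)
    (hdim : ¬ FiniteDimensional ℝ P)
    (heven : ∀ u : P × Q, I (-u) = I u)
    -- the action of G on X
    (act : G → P × Q → P × Q)
    (hact_one : act 1 = id)
    (hact_mul : ∀ g h : G, act (g * h) = act g ∘ act h)
    -- (G): G acts by isometries, orbits of nonzero points are discrete,
    -- J is G-invariant and X⁺, X⁻ are G-invariant
    (hact_isom : ∀ (g : G) (u v : P × Q), XNorm (act g u - act g v) = XNorm (u - v))
    (hdiscrete : ∀ u : P × Q, u ≠ 0 → ∃ d : ℝ, 0 < d ∧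
      ∀ g : G, act g u ≠ u → d ≤ XNorm (act g u - u))
    (hJinv : ∀ (g : G) (u : P × Q), Jfun I (act g u) = Jfun I u)
    (hPinv : ∀ (g : G) (p : P), (act g ((p, 0) : P × Q)).2 = 0)
    (hQinv : ∀ (g : G) (q : Q), (act g ((0, q) : P × Q)).1 = 0)
    -- (M)_0^β for every β > 0
    (hM : ∀ β : ℝ, 0 < β → McondZero I m act β) :
    -- infinitely many distinct critical orbits of 𝒥 = J∘m
    ∃ u : ℕ → P, (∀ n, fderiv ℝ (fun p => Jfun I (m p)) (u n) = 0) ∧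
      ∀ i j : ℕ, i ≠ j → ∀ g : G, actP act g (u i) ≠ u j := by
  exact abstract_infinitely_many_critical_orbits_general hI.refl hI.i1.1 hI.i1.2.1 hI.i1.2.2
    hI.i2 hI.i3 hI.i4 (hm.isFiberMin hI.i5) hI.i6.1 hI.i6.2.2 (fun _ hp => hI.le_Jfun hp) hI.i7
    hdim heven hact_one hact_mul hact_isom hJinv hPinv hM

end Multiplicity
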